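/- arXiv:2212.14792 — 2 statements merged into one kernel-verified Lean document; each statement's English description precedes it below -/
import Mathlib

section
/- Let Γ be a connected graph. There exists an integer t ≥ 1 with depth R/I^{(t)} = 1 if and only if Γ has two disjoint maximal independent sets F, G such that the induced subgraph Γ_{F∪G} is connected. Moreover, in this case depth R/I^{(t)} = 1 for every t ≥ |F| + |G|. -/
open MvPolynomial

noncomputable section

/-- The edge ideal of a graph `Γ` on vertex set `σ`, in `k[x_i : i ∈ σ]`. -/
def edgeIdeal (k : Type) [Field k] {σ : Type} (Γ : SimpleGraph σ) :
    Ideal (MvPolynomial σ k) :=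
  Ideal.span { m | ∃ i j : σ, Γ.Adj i j ∧ m = X i * X j }

/-- The maximal graded ideal `(x_i : i ∈ σ)` of `k[x_i : i ∈ σ]`. -/
def maxIdeal (k : Type) [Field k] (σ : Type) : Ideal (MvPolynomial σ k) :=
  Ideal.span (Set.range (X : σ → MvPolynomial σ k))

/-- `depth R/J = 0`, i.e. the maximal graded ideal is an associated prime of `R/J`. -/
def DepthZero (k : Type) [Field k] {σ : Type} (J : Ideal (MvPolynomial σ k)) : Prop :=
  maxIdeal k σ ∈ associatedPrimes (MvPolynomial σ k) (MvPolynomial σ k ⧸ J)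

/-- The `i`-th local cohomology of `R/J` with support in the maximal graded ideal. -/
def locCoh (k : Type) [Field k] {σ : Type} (J : Ideal (MvPolynomial σ k)) (i : ℕ) :=
  (localCohomology (maxIdeal k σ) i).obj (ModuleCat.of _ (MvPolynomial σ k ⧸ J))

/-- `depth R/J`, defined as the least `i` with `H^i_m(R/J) ≠ 0`. -/
def rDepth (k : Type) [Field k] {σ : Type} (J : Ideal (MvPolynomial σ k)) : ℕ :=
  sInf { i | Nontrivial (locCoh k J i) }

/-- A set `U` of vertices is dominating: every vertex outside `U` is adjacent to a
vertex of `U`. -/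
def Dominating {σ : Type} (Γ : SimpleGraph σ) (U : Set σ) : Prop :=
  ∀ v ∉ U, ∃ u ∈ U, Γ.Adj u v

/-- The closed neighborhood `N[v]` of a vertex. -/
def closedNbhd {σ : Type} (Γ : SimpleGraph σ) (v : σ) : Set σ :=
  insert v { u | Γ.Adj v u }

/-- The closed neighborhood `N[C]` of a set of vertices. -/
def closedNbhdSet {σ : Type} (Γ : SimpleGraph σ) (C : Set σ) : Set σ :=
  ⋃ v ∈ C, closedNbhd Γ v

/-- An odd cycle of length `m` (given as an injective map `ZMod m → σ` with consecutive
vertices adjacent) in `Γ`. -/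
def IsOddCycle {σ : Type} (Γ : SimpleGraph σ) (m : ℕ) (c : ZMod m → σ) : Prop :=
  Odd m ∧ 3 ≤ m ∧ Function.Injective c ∧ ∀ i, Γ.Adj (c i) (c (i + 1))

/-- `F` is an independent set of `Γ`. -/
def IsIndep {σ : Type} [Fintype σ] [DecidableEq σ] (Γ : SimpleGraph σ) (F : Finset σ) : Prop :=
  ∀ i ∈ F, ∀ j ∈ F, ¬ Γ.Adj i j

/-- `F` is a maximal independent set of `Γ`. -/
def IsMaxIndep {σ : Type} [Fintype σ] [DecidableEq σ] (Γ : SimpleGraph σ) (F : Finset σ) : Prop :=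
  IsIndep Γ F ∧ ∀ G : Finset σ, IsIndep Γ G → F ⊆ G → G = F

/-- The prime ideal `P_F = (x_i : i ∉ F)`. -/
def PF (k : Type) [Field k] {σ : Type} [Fintype σ] [DecidableEq σ] (F : Finset σ) :
    Ideal (MvPolynomial σ k) :=
  Ideal.span { m | ∃ i ∉ F, m = X i }

/-- The `t`-th symbolic power `I^{(t)} = ⋂_{F maximal independent} P_F^t` of the edge ideal. -/
def symbPow (k : Type) [Field k] {σ : Type} [Fintype σ] [DecidableEq σ]
    (Γ : SimpleGraph σ) (t : ℕ) : Ideal (MvPolynomial σ k) :=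
  ⨅ F ∈ { F : Finset σ | IsMaxIndep Γ F }, PF k F ^ t

/-- The monomial `x^a`. -/
def xPow (k : Type) [Field k] {σ : Type} [Fintype σ] (a : σ → ℕ) : MvPolynomial σ k :=
  ∏ i, X i ^ a i

/-- The localization `R[x_i^{-1} : i ∈ F]`. -/
abbrev locAt (k : Type) [Field k] {σ : Type} (F : Finset σ) :=
  Localization (Submonoid.closure ((fun i => (X i : MvPolynomial σ k)) '' (F : Set σ)))

/-- The degree complex `Δ_a(J) = {F : x^a ∉ J·R[x_i^{-1} : i ∈ F]}` of a monomial ideal `J`. -/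
def degComplex (k : Type) [Field k] {σ : Type} [Fintype σ] (J : Ideal (MvPolynomial σ k))
    (a : σ → ℕ) : Set (Finset σ) :=
  { F | algebraMap (MvPolynomial σ k) (locAt k F) (xPow k a) ∉
      J.map (algebraMap (MvPolynomial σ k) (locAt k F)) }

/-- `F` is a facet (maximal face) of the complex `Δ`. -/
def IsFacet {σ : Type} (Δ : Set (Finset σ)) (F : Finset σ) : Prop :=
  F ∈ Δ ∧ ∀ G ∈ Δ, F ⊆ G → G = F

/-- The complex `Δ` is disconnected: its vertex set splits into two nonempty parts such that
no face meets both. -/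
def ComplexDisconnected {σ : Type} (Δ : Set (Finset σ)) : Prop :=
  ∃ A B : Set σ, A.Nonempty ∧ B.Nonempty ∧ Disjoint A B ∧
    (∀ i, {i} ∈ Δ ↔ i ∈ A ∪ B) ∧
    ∀ F ∈ Δ, ¬ ((∃ i ∈ F, i ∈ A) ∧ (∃ j ∈ F, j ∈ B))

/-- The polynomial ring `R_v = k[x_i : i ≠ v]`. -/
abbrev Rv (k : Type) [Field k] {σ : Type} (v : σ) := MvPolynomial { i : σ // i ≠ v } k

/-- The localization `R[x_v^{-1}]`. -/
abbrev LocAway (k : Type) [Field k] {σ : Type} (v : σ) :=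
  Localization.Away (X v : MvPolynomial σ k)

/-- For an ideal `I` of `R`, the ideal `I_v = I·R[x_v^{-1}] ∩ R_v` of `R_v`. -/
def idealV (k : Type) [Field k] {σ : Type} (I : Ideal (MvPolynomial σ k)) (v : σ) :
    Ideal (Rv k v) :=
  Ideal.comap ((algebraMap (MvPolynomial σ k) (LocAway k v)).comp
      (MvPolynomial.rename (Subtype.val : { i : σ // i ≠ v } → σ)).toRingHom)
    (I.map (algebraMap (MvPolynomial σ k) (LocAway k v)))

/-- The edge ideal of the induced subgraph `Γ_U` in `k[x_i : i ∈ U]`. -/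
def edgeIdealOn (k : Type) [Field k] {σ : Type} (Γ : SimpleGraph σ) (U : Set σ) :
    Ideal (MvPolynomial U k) :=
  Ideal.span { m | ∃ i j : U, Γ.Adj (i : σ) (j : σ) ∧ m = X i * X j }

/-- `Γ` has no isolated vertices. -/
def NoIsolated {σ : Type} (Γ : SimpleGraph σ) : Prop :=
  ∀ v : σ, ∃ u : σ, Γ.Adj v u



section hom
open CategoryTheory Limits Opposite
variable {R : Type} [CommRing R]

lemma opc_surj (K : ChainComplex (ModuleCat.{0} R)ᵒᵖ ℕ) (n : ℕ) :
    Function.Surjective (K.homologyι n).unop := by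
  rw [← ModuleCat.epi_iff_surjective]; infer_instance

lemma opc_inj (K : ChainComplex (ModuleCat.{0} R)ᵒᵖ ℕ) (n : ℕ) :
    Function.Injective (K.pOpcycles n).unop := by
  rw [← ModuleCat.mono_iff_injective]; infer_instance

lemma opc_d (K : ChainComplex (ModuleCat.{0} R)ᵒᵖ ℕ) (n m : ℕ) (c : (K.opcycles n).unop) :
    (K.d m n).unop ((K.pOpcycles n).unop c) = 0 := by
  have h := congrArg Quiver.Hom.unop (K.d_pOpcycles m n)
  rw [unop_comp] at h
  exact congrArg (fun f => f.hom c) h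

lemma opc_exists (K : ChainComplex (ModuleCat.{0} R)ᵒᵖ ℕ) (n : ℕ) (x : (K.X n).unop)
    (hx : (K.d (n+1) n).unop x = 0) : ∃ c, (K.pOpcycles n).unop c = x := by
  have e : (ShortComplex.mk _ _ (K.d_pOpcycles (n+1) n)).Exact :=
    ShortComplex.exact_of_g_is_cokernel _ (K.opcyclesIsCokernel (n+1) n (by simp))
  exact ((ShortComplex.moduleCat_exact_iff _).1 e.unop) x hx

lemma opc_ker (K : ChainComplex (ModuleCat.{0} R)ᵒᵖ ℕ) (n : ℕ) (c : (K.opcycles (n+1)).unop) :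
    (K.homologyι (n+1)).unop c = 0 ↔ ∃ w, (K.pOpcycles (n+1)).unop c = (K.d (n+1) n).unop w := by
  have e : (ShortComplex.mk _ _ (K.homologyι_comp_fromOpcycles (n+1) n)).Exact :=
    ShortComplex.exact_of_f_is_kernel _ (K.homologyIsKernel (n+1) n (by simp))
  have h := congrArg Quiver.Hom.unop (K.p_fromOpcycles (n+1) n)
  have h2 := congrArg Quiver.Hom.unop (K.homologyι_comp_fromOpcycles (n+1) n)
  rw [unop_comp] at h h2
  constructor
  · intro hc
    obtain ⟨w, hw⟩ := ((ShortComplex.moduleCat_exact_iff _).1 e.unop) c hc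
    refine ⟨w, ?_⟩
    rw [← h, ← hw]; rfl
  · rintro ⟨w, hw⟩
    have : c = (K.fromOpcycles (n+1) n).unop w := by
      apply opc_inj K
      rw [hw, ← h]; rfl
    rw [this]
    exact congrArg (fun f => f.hom w) h2

/-- the Hom functor -/
noncomputable abbrev homF (M : ModuleCat.{0} R) : ModuleCat.{0} R ⥤ (ModuleCat.{0} R)ᵒᵖ :=
  ((linearYoneda R (ModuleCat.{0} R)).obj M).rightOp

/-- the Hom complex -/
noncomputable abbrev homK {X : ModuleCat.{0} R} (P : ProjectiveResolution X) (M : ModuleCat.{0} R) :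
    ChainComplex (ModuleCat.{0} R)ᵒᵖ ℕ :=
  ((homF M).mapHomologicalComplex (ComplexShape.down ℕ)).obj P.complex

/-- Ext as homology -/
noncomputable def extIso (n : ℕ) {X : ModuleCat.{0} R} (P : ProjectiveResolution X)
    (M : ModuleCat.{0} R) :
    ((homK P M).homology n).unop ≅ ((Ext R (ModuleCat.{0} R) n).obj (op X)).obj M :=
  (P.isoLeftDerivedObj (homF M) n).unop

/-- projection -/
noncomputable def extProj (n : ℕ) {X : ModuleCat.{0} R} (P : ProjectiveResolution X)
    (M : ModuleCat.{0} R) :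
    ((homK P M).opcycles n).unop ⟶ ((Ext R (ModuleCat.{0} R) n).obj (op X)).obj M :=
  ((homK P M).homologyι n).unop ≫ (extIso n P M).hom

/-- Represented by a cocycle -/
def ExtRep (n : ℕ) {X : ModuleCat.{0} R} (P : ProjectiveResolution X)
    {M : ModuleCat.{0} R} (z : P.complex.X n ⟶ M)
    (e : ((Ext R (ModuleCat.{0} R) n).obj (op X)).obj M) : Prop :=
  ∃ c, ((homK P M).pOpcycles n).unop c = z ∧ extProj n P M c = e

lemma rep_exists_z (n : ℕ) {X : ModuleCat.{0} R} (P : ProjectiveResolution X)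
    {M : ModuleCat.{0} R} (e : ((Ext R (ModuleCat.{0} R) n).obj (op X)).obj M) :
    ∃ z : P.complex.X n ⟶ M, P.complex.d (n+1) n ≫ z = 0 ∧ ExtRep n P z e := by
  have : Function.Surjective (extProj n P M) := by
    rw [← ModuleCat.epi_iff_surjective]
    unfold extProj
    exact epi_comp _ _
  obtain ⟨c, hc⟩ := this e
  exact ⟨((homK P M).pOpcycles n).unop c, opc_d (homK P M) n (n+1) c, c, rfl, hc⟩

lemma rep_exists_e (n : ℕ) {X : ModuleCat.{0} R} (P : ProjectiveResolution X)
    {M : ModuleCat.{0} R} (z : P.complex.X n ⟶ M) (hz : P.complex.d (n+1) n ≫ z = 0) :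
    ∃ e, ExtRep n P z e := by
  obtain ⟨c, hc⟩ := opc_exists (homK P M) n z hz
  exact ⟨_, c, hc, rfl⟩

lemma extProj_zero (n : ℕ) {X : ModuleCat.{0} R} (P : ProjectiveResolution X)
    (M : ModuleCat.{0} R) (c) : extProj n P M c = 0 ↔ ((homK P M).homologyι n).unop c = 0 := by
  have : Function.Injective (extIso n P M).hom := by
    rw [← ModuleCat.mono_iff_injective]; infer_instance
  unfold extProj
  rw [ModuleCat.comp_apply]
  exact map_eq_zero_iff _ this

lemma rep_zero (n : ℕ) {X : ModuleCat.{0} R} (P : ProjectiveResolution X)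
    {M : ModuleCat.{0} R} (z : P.complex.X (n+1) ⟶ M) (e) (h : ExtRep (n+1) P z e) :
    e = 0 ↔ ∃ w : P.complex.X n ⟶ M, z = P.complex.d (n+1) n ≫ w := by
  obtain ⟨c, rfl, rfl⟩ := h
  rw [extProj_zero]
  exact opc_ker (homK P M) n c

lemma rep_of_zero (n : ℕ) {X : ModuleCat.{0} R} (P : ProjectiveResolution X)
    {M : ModuleCat.{0} R} (e) (h : ExtRep n P (0 : P.complex.X n ⟶ M) e) : e = 0 := by
  obtain ⟨c, hc, rfl⟩ := h
  have : c = 0 := by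
    apply opc_inj (homK P M)
    rw [map_zero]; exact hc
  rw [this, map_zero]

lemma rep_map (n : ℕ) {X Y : ModuleCat.{0} R} (f : X ⟶ Y) (P : ProjectiveResolution X)
    (Q : ProjectiveResolution Y) (φ : P.complex ⟶ Q.complex)
    (comm : φ.f 0 ≫ Q.π.f 0 = P.π.f 0 ≫ f)
    {M : ModuleCat.{0} R} (z : Q.complex.X n ⟶ M) (e) (h : ExtRep n Q z e) :
    ExtRep n P (φ.f n ≫ z) (((Ext R (ModuleCat.{0} R) n).map f.op).app M e) := by
  obtain ⟨c, rfl, rfl⟩ := h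
  let ψ := ((homF M).mapHomologicalComplex (ComplexShape.down ℕ)).map φ
  refine ⟨(HomologicalComplex.opcyclesMap ψ n).unop c, ?_, ?_⟩
  · have h := congrArg Quiver.Hom.unop (HomologicalComplex.p_opcyclesMap ψ n)
    rw [unop_comp, unop_comp] at h
    exact congrArg (fun f => f.hom c) h
  · have h := ProjectiveResolution.isoLeftDerivedObj_hom_naturality f P Q φ comm (homF M) n
    have h2 := HomologicalComplex.homologyι_naturality ψ n
    have h' : (extIso n Q M).hom ≫ ((Ext R (ModuleCat.{0} R) n).map f.op).app M =
        (HomologicalComplex.homologyMap ψ n).unop ≫ (extIso n P M).hom :=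
      congrArg Quiver.Hom.unop h
    have h2' : ((homK Q M).homologyι n).unop ≫ (HomologicalComplex.homologyMap ψ n).unop =
       (HomologicalComplex.opcyclesMap ψ n).unop ≫ ((homK P M).homologyι n).unop :=
      congrArg Quiver.Hom.unop h2
    have h3 : extProj n Q M ≫ ((Ext R (ModuleCat.{0} R) n).map f.op).app M =
        (HomologicalComplex.opcyclesMap ψ n).unop ≫ extProj n P M := by
      unfold extProj
      rw [Category.assoc, h', ← Category.assoc, h2', Category.assoc]
    exact (congrArg (fun f => f.hom c) h3).symm

/-- quotient map -/
noncomputable def qMap (I : Ideal R) {s s' : ℕ} (h : s ≤ s') :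
    ModuleCat.of R (R ⧸ I ^ s') ⟶ ModuleCat.of R (R ⧸ I ^ s) :=
  ModuleCat.ofHom <| Submodule.mapQ _ _ LinearMap.id (Ideal.pow_le_pow_right h)

/-- the cocone map -/
noncomputable def lcι (I : Ideal R) (i : ℕ) (M : ModuleCat.{0} R) (s : ℕ) :
    ((Ext R (ModuleCat.{0} R) i).obj (op (ModuleCat.of R (R ⧸ I ^ s)))).obj M ⟶
      (localCohomology I i).obj M :=
  (colimit.ι (localCohomology.diagram (localCohomology.idealPowersDiagram I) i) (op (op s))).app M

noncomputable def lcColim (I : Ideal R) (i : ℕ) (M : ModuleCat.{0} R) :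
    IsColimit (((evaluation _ _).obj M).mapCocone
      (colimit.cocone (localCohomology.diagram (localCohomology.idealPowersDiagram I) i))) :=
  isColimitOfPreserves _ (colimit.isColimit _)

lemma lc_rep (I : Ideal R) (i : ℕ) (M : ModuleCat.{0} R) (x : (localCohomology I i).obj M) :
    ∃ s e, lcι I i M s e = x := by
  obtain ⟨j, e, he⟩ := Concrete.isColimit_exists_rep _ (lcColim I i M) x
  exact ⟨j.unop.unop, e, he⟩

lemma lc_zero (I : Ideal R) (i : ℕ) (M : ModuleCat.{0} R) (s : ℕ) (e) :
    lcι I i M s e = 0 ↔ ∃ (s' : ℕ) (h : s ≤ s'),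
      ((Ext R (ModuleCat.{0} R) i).map (qMap I h).op).app M e = 0 := by
  have key := Concrete.isColimit_rep_eq_iff_exists _ (lcColim I i M) (i := op (op s)) (j := op (op s)) e 0
  rw [map_zero] at key
  refine Iff.trans key ?_
  constructor
  · rintro ⟨j, f, g, h⟩
    rw [map_zero] at h
    exact ⟨j.unop.unop, f.unop.unop.down.down, h⟩
  · rintro ⟨s', hs, h⟩
    refine ⟨op (op s'), (homOfLE hs).op.op, (homOfLE hs).op.op, ?_⟩
    rw [map_zero]
    exact h

lemma pr_exact0 {X : ModuleCat.{0} R} (P : ProjectiveResolution X) (p : P.complex.X 0) :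
    P.π.f 0 p = 0 → ∃ y, P.complex.d 1 0 y = p := by
  intro h
  exact (ShortComplex.moduleCat_exact_iff _).1 P.exact₀ p h

lemma pr_exact1 {X : ModuleCat.{0} R} (P : ProjectiveResolution X) (p : P.complex.X 1) :
    P.complex.d 1 0 p = 0 → ∃ y, P.complex.d 2 1 y = p := by
  intro h
  exact (ShortComplex.moduleCat_exact_iff _).1 (P.exact_succ 0) p h

lemma pr_zero {X : ModuleCat.{0} R} (P : ProjectiveResolution X) (y) :
    P.π.f 0 (P.complex.d 1 0 y) = 0 := by
  have := P.complex_d_comp_π_f_zero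
  exact congrArg (fun f => f.hom y) this

lemma lc0_sub (I : Ideal R) (M : ModuleCat.{0} R)
    (htf : ∀ s, ∀ x : M, (∀ r ∈ I ^ s, r • x = 0) → x = 0) :
    Subsingleton ((localCohomology I 0).obj M) := by
  refine subsingleton_of_forall_eq 0 fun x => ?_
  obtain ⟨s, e, rfl⟩ := lc_rep I 0 M x
  let P := projectiveResolution (ModuleCat.of R (R ⧸ I ^ s))
  obtain ⟨z, hz, hr⟩ := rep_exists_z 0 P e
  have : z = 0 := by
    ext p
    refine htf s _ fun r hr => ?_
    have h0 : P.π.f 0 (r • p) = 0 := by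
      rw [map_smul]
      have : ∀ q : R ⧸ I ^ s, r • q = 0 := by
        intro q
        obtain ⟨q, rfl⟩ := Ideal.Quotient.mk_surjective q
        change Ideal.Quotient.mk (I ^ s) (r * q) = 0
        rw [Ideal.Quotient.eq_zero_iff_mem]
        exact Ideal.mul_mem_right _ _ hr
      exact this _
    obtain ⟨y, hy⟩ := pr_exact0 P _ h0
    have h1 : z (r • p) = 0 := by
      rw [← hy]
      exact congrArg (fun f => f.hom y) hz
    rw [map_smul] at h1
    exact h1
  subst this
  rw [rep_of_zero 0 P e hr, map_zero]

lemma pr_surj {X : ModuleCat.{0} R} (P : ProjectiveResolution X) :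
    Function.Surjective (P.π.f 0) := by
  rw [← ModuleCat.epi_iff_surjective]; infer_instance

lemma pr_lift {X : ModuleCat.{0} R} (Q : ModuleCat.{0} R) [Projective Q]
   (P : ProjectiveResolution X) (f : Q ⟶ P.complex.X 0)
    (hf : ∀ q, P.π.f 0 (f q) = 0) : ∃ h : Q ⟶ P.complex.X 1, ∀ q, P.complex.d 1 0 (h q) = f q := by
  have hf' : f ≫ P.π.f 0 = 0 := by
    ext q; exact hf q
  refine ⟨P.exact₀.liftFromProjective f hf', fun q => ?_⟩
  exact congrArg (fun f => f.hom q) (P.exact₀.liftFromProjective_comp f hf')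

lemma pr_ell (I : Ideal R) (P : ProjectiveResolution (ModuleCat.of R (R ⧸ I))) :
    ∃ ℓ : P.complex.X 0 →ₗ[R] R, ∀ q, (Ideal.Quotient.mk I (ℓ q) : R ⧸ I) = P.π.f 0 q := by
  let m : ModuleCat.of R R ⟶ ModuleCat.of R (R ⧸ I) := ModuleCat.ofHom (Submodule.mkQ I)
  have hm : Epi m := by
    rw [ModuleCat.epi_iff_surjective]
    exact Submodule.mkQ_surjective I
  let p : P.complex.X 0 ⟶ ModuleCat.of R (R ⧸ I) := P.π.f 0
  refine ⟨(Projective.factorThru p m).hom, fun q => ?_⟩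
  exact congrArg (fun f => f.hom q) (Projective.factorThru_comp p m)

lemma pr_map (I : Ideal R) {s s' : ℕ} (h : s ≤ s')
    (P' : ProjectiveResolution (ModuleCat.of R (R ⧸ I ^ s')))
    (P : ProjectiveResolution (ModuleCat.of R (R ⧸ I ^ s))) :
    ∃ g : P'.complex ⟶ P.complex, (g.f 0 ≫ P.π.f 0 = P'.π.f 0 ≫ qMap I h) ∧
     ∀ (q : P'.complex.X 0) (r : R), (P'.π.f 0 q : R ⧸ I ^ s') = Ideal.Quotient.mk (I ^ s') r →
       (P.π.f 0 (g.f 0 q) : R ⧸ I ^ s) = Ideal.Quotient.mk (I ^ s) r := by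
  have hc := ProjectiveResolution.lift_commutes_zero (qMap I h) P' P
  refine ⟨ProjectiveResolution.lift (qMap I h) P' P, hc, fun q r hq => ?_⟩
  have := congrArg (fun f => f.hom q) hc
  refine this.trans ?_
  change (qMap I h).hom (P'.π.f 0 q) = _
  rw [hq]
  rfl

lemma chain_comm {K L : ChainComplex (ModuleCat.{0} R) ℕ} (g : K ⟶ L) (y : K.X 1) :
    L.d 1 0 (g.f 1 y) = g.f 0 (K.d 1 0 y) :=
  congrArg (fun f => f.hom y) (g.comm 1 0)

lemma lc1_sub (I : Ideal R) (M : ModuleCat.{0} R)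
    (H : ∀ s (φ : ↥(I ^ s) →ₗ[R] M), ∃ (s' : ℕ) (h : s ≤ s') (u : M), ∀ r (hr : r ∈ I ^ s'),
      φ ⟨r, Ideal.pow_le_pow_right h hr⟩ = r • u) :
    Subsingleton ((localCohomology I 1).obj M) := by
  refine subsingleton_of_forall_eq 0 fun x => ?_
  obtain ⟨s, e, rfl⟩ := lc_rep I 1 M x
  let P := projectiveResolution (ModuleCat.of R (R ⧸ I ^ s))
  obtain ⟨z, hz, hrep⟩ := rep_exists_z 1 P e
  have wd : ∀ y, P.complex.d 1 0 y = 0 → z y = 0 := by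
    intro y hy
    obtain ⟨w, rfl⟩ := pr_exact1 P y hy
    exact congrArg (fun f => f.hom w) hz
  have wd' : ∀ y y', P.complex.d 1 0 y = P.complex.d 1 0 y' → z y = z y' := by
    intro y y' hy
    have := wd (y - y') (by rw [map_sub, hy, sub_self])
    rw [map_sub] at this
    exact sub_eq_zero.1 this
  obtain ⟨p0, hp0⟩ := pr_surj P (Ideal.Quotient.mk (I ^ s) 1 : R ⧸ I ^ s)
  have hp : ∀ r : R, (P.π.f 0 (r • p0) : R ⧸ I ^ s) = Ideal.Quotient.mk (I ^ s) r := by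
    intro r
    have : P.π.f 0 (r • p0) = r • P.π.f 0 p0 := map_smul _ _ _
    rw [this, hp0]
    change Ideal.Quotient.mk (I ^ s) (r * 1) = _
    rw [mul_one]
  have hy : ∀ r : ↥(I ^ s), ∃ y, P.complex.d 1 0 y = (r : R) • p0 := by
    intro r
    apply pr_exact0
    refine (hp r).trans ?_
    exact Ideal.Quotient.eq_zero_iff_mem.2 r.2
  choose Y hY using hy
  let φ : ↥(I ^ s) →ₗ[R] M :=
    { toFun := fun r => z (Y r)
      map_add' := by
        intro a b
        rw [← map_add]
        apply wd'
        rw [map_add, hY, hY, hY]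
        exact add_smul _ _ _
      map_smul' := by
        intro a b
        rw [← map_smul]
        apply wd'
        rw [map_smul, hY, hY]
        exact mul_smul _ _ _ }
  obtain ⟨s', h, u, hu⟩ := H s φ
  rw [lc_zero]
  refine ⟨s', h, ?_⟩
  let P' := projectiveResolution (ModuleCat.of R (R ⧸ I ^ s'))
  obtain ⟨g, hg, hg'⟩ := pr_map I h P' P
  refine (rep_zero 0 P' _ _ (rep_map 1 _ P' P g hg z e hrep)).2 ?_
  obtain ⟨ℓ, hℓ⟩ := pr_ell _ P'
  obtain ⟨k, hk⟩ := pr_lift (P'.complex.X 0) P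
    (g.f 0 - ModuleCat.ofHom (((LinearMap.toSpanSingleton R _ p0)).comp ℓ)) (by
      intro q
      have e1 : (g.f 0 - ModuleCat.ofHom (((LinearMap.toSpanSingleton R _ p0)).comp ℓ)) q
        = g.f 0 q - ℓ q • p0 := rfl
      rw [e1, map_sub, sub_eq_zero]
      exact (hg' q (ℓ q) (hℓ q).symm).trans (hp (ℓ q)).symm)
  refine ⟨k ≫ z + ModuleCat.ofHom ((LinearMap.toSpanSingleton R _ u).comp ℓ), ?_⟩
  ext y
  have hmem : ℓ (P'.complex.d 1 0 y) ∈ I ^ s' := by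
    rw [← Ideal.Quotient.eq_zero_iff_mem, hℓ]
    exact pr_zero P' y
  have e2 := hu _ hmem
  have e3 : φ ⟨ℓ (P'.complex.d 1 0 y), Ideal.pow_le_pow_right h hmem⟩ =
      z (g.f 1 y - k (P'.complex.d 1 0 y)) := by
    apply wd'
    rw [hY, map_sub, hk, chain_comm]
    have : (g.f 0 - ModuleCat.ofHom (((LinearMap.toSpanSingleton R _ p0)).comp ℓ))
      (P'.complex.d 1 0 y) = g.f 0 (P'.complex.d 1 0 y) - ℓ (P'.complex.d 1 0 y) • p0 := rfl
    rw [this, sub_sub_cancel]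
  rw [e3, map_sub, sub_eq_iff_eq_add] at e2
  change z (g.f 1 y) = z (k (P'.complex.d 1 0 y)) + ℓ (P'.complex.d 1 0 y) • u
  rw [e2, add_comm]

lemma lc1_nontriv (I : Ideal R) (M : ModuleCat.{0} R) (s : ℕ) (φ : ↥(I ^ s) →ₗ[R] M)
    (H : ∀ (s' : ℕ) (h : s ≤ s') (u : M), ¬ ∀ r (hr : r ∈ I ^ s'),
      φ ⟨r, Ideal.pow_le_pow_right h hr⟩ = r • u) :
    Nontrivial ((localCohomology I 1).obj M) := by
  let P := projectiveResolution (ModuleCat.of R (R ⧸ I ^ s))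
  obtain ⟨ℓ, hℓ⟩ := pr_ell _ P
  have hmem : ∀ y, ℓ (P.complex.d 1 0 y) ∈ I ^ s := by
    intro y
    rw [← Ideal.Quotient.eq_zero_iff_mem, hℓ]
    exact pr_zero P y
  let z : P.complex.X 1 ⟶ M := ModuleCat.ofHom
    (φ.comp ((ℓ.comp (P.complex.d 1 0).hom).codRestrict (I ^ s) hmem))
  have hz : P.complex.d 2 1 ≫ z = 0 := by
    ext y
    have h0 : P.complex.d 1 0 (P.complex.d 2 1 y) = 0 :=
      congrArg (fun f => f.hom y) (P.complex.d_comp_d 2 1 0)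
    change φ ⟨ℓ (P.complex.d 1 0 (P.complex.d 2 1 y)), _⟩ = 0
    have : (⟨ℓ (P.complex.d 1 0 (P.complex.d 2 1 y)), hmem _⟩ : ↥(I ^ s)) = 0 := by
      ext; simp [h0]
    rw [this, map_zero]
  obtain ⟨e, he⟩ := rep_exists_e 1 P z hz
  refine ⟨lcι I 1 M s e, 0, fun h0 => ?_⟩
  rw [lc_zero] at h0
  obtain ⟨s', h, h0⟩ := h0
  let P' := projectiveResolution (ModuleCat.of R (R ⧸ I ^ s'))
  obtain ⟨g, hg, hg'⟩ := pr_map I h P' P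
  obtain ⟨w, hw⟩ := (rep_zero 0 P' _ _ (rep_map 1 _ P' P g hg z e he)).1 h0
  obtain ⟨p0, hp0⟩ := pr_surj P' (Ideal.Quotient.mk (I ^ s') 1 : R ⧸ I ^ s')
  have hp : ∀ r : R, (P'.π.f 0 (r • p0) : R ⧸ I ^ s') = Ideal.Quotient.mk (I ^ s') r := by
    intro r
    have : P'.π.f 0 (r • p0) = r • P'.π.f 0 p0 := map_smul _ _ _
    rw [this, hp0]
    change Ideal.Quotient.mk (I ^ s') (r * 1) = _
    rw [mul_one]
  set c : R := ℓ (g.f 0 p0) with hc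
  have hc1 : c - 1 ∈ I ^ s := by
    rw [← Ideal.Quotient.eq_zero_iff_mem, map_sub, hc, sub_eq_zero]
    exact (hℓ _).trans (hg' p0 1 hp0)
  refine H s' h (w p0 - φ ⟨c - 1, hc1⟩) fun r hr => ?_
  obtain ⟨y, hy⟩ := pr_exact0 P' (r • p0) ((hp r).trans (Ideal.Quotient.eq_zero_iff_mem.2 hr))
  have hr' := Ideal.pow_le_pow_right h hr
  have e1 : z (g.f 1 y) = w (P'.complex.d 1 0 y) := congrArg (fun f => f.hom y) hw
  have e2 : z (g.f 1 y) = c • φ ⟨r, hr'⟩ := by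
    change φ ⟨ℓ (P.complex.d 1 0 (g.f 1 y)), _⟩ = _
    rw [← map_smul]
    congr 1
    ext
    change ℓ (P.complex.d 1 0 (g.f 1 y)) = c * r
    rw [chain_comm, hy]
    rw [map_smul, map_smul, ← hc, smul_eq_mul, mul_comm]
  have e3 : w (P'.complex.d 1 0 y) = r • w p0 := by rw [hy, map_smul]
  have e4 : r • φ ⟨c - 1, hc1⟩ = (c - 1) • φ ⟨r, hr'⟩ := by
    rw [← map_smul, ← map_smul]
    congr 1
    ext
    change r * (c - 1) = (c - 1) * r
    ring
  rw [smul_sub, e4, ← e3, ← e1, e2, sub_smul, one_smul]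
  abel
end hom

section comb
variable {n : ℕ}

/-- degree outside F -/
def od (F : Finset (Fin n)) (m : Fin n →₀ ℕ) : ℕ := ∑ i ∈ Fᶜ, m i

lemma od_add (F : Finset (Fin n)) (m m' : Fin n →₀ ℕ) : od F (m + m') = od F m + od F m' := by
  simp [od, Finset.sum_add_distrib]

lemma od_single_mem (F : Finset (Fin n)) (i : Fin n) (hi : i ∈ F) (s : ℕ) :
    od F (Finsupp.single i s) = 0 := by
  unfold od
  refine Finset.sum_eq_zero fun j hj => ?_
  rw [Finsupp.single_apply, if_neg]
  rintro rfl
  simp [hi] at hj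

lemma od_single_not_mem (F : Finset (Fin n)) (i : Fin n) (hi : i ∉ F) (s : ℕ) :
    od F (Finsupp.single i s) = s := by
  unfold od
  rw [Finset.sum_eq_single i]
  · simp
  · intro j _ hj; rw [Finsupp.single_apply, if_neg (Ne.symm hj)]
  · intro h; simp [hi] at h

lemma od_mono (F : Finset (Fin n)) {m m' : Fin n →₀ ℕ} (h : m ≤ m') : od F m ≤ od F m' :=
  Finset.sum_le_sum fun i _ => h i

lemma od_sum (F : Finset (Fin n)) (m : Fin n →₀ ℕ) : od F m + ∑ i ∈ F, m i = ∑ i, m i := by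
  unfold od
  rw [add_comm]; exact Finset.sum_add_sum_compl F _

lemma extend_indep (Γ : SimpleGraph (Fin n)) (S : Finset (Fin n)) (hS : IsIndep Γ S) :
    ∃ F, S ⊆ F ∧ IsMaxIndep Γ F := by
  obtain ⟨F, hF, hm⟩ := (Set.toFinite {F : Finset (Fin n) | IsIndep Γ F}).exists_le_maximal hS
  exact ⟨F, hF, hm.1, fun G hG hFG => le_antisymm (hm.2 hG hFG) hFG⟩

lemma maxIndep_adj (Γ : SimpleGraph (Fin n)) (F : Finset (Fin n)) (hF : IsMaxIndep Γ F)
    (v : Fin n) (hv : v ∉ F) : ∃ u ∈ F, Γ.Adj v u := by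
  by_contra hcon
  push Not at hcon
  have : IsIndep Γ (insert v F) := by
    intro i hi j hj hij
    rw [Finset.mem_insert] at hi hj
    rcases hi with rfl | hi <;> rcases hj with rfl | hj
    · exact Γ.loopless.irrefl _ hij
    · exact hcon j hj hij
    · exact hcon i hi hij.symm
    · exact hF.1 i hi j hj hij
  have := hF.2 _ this (Finset.subset_insert _ _)
  exact hv (this ▸ Finset.mem_insert_self v F)

lemma maxIndep_nonempty (Γ : SimpleGraph (Fin n)) (hn : Nonempty (Fin n)) (F : Finset (Fin n))
    (hF : IsMaxIndep Γ F) : F.Nonempty := by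
  obtain ⟨v⟩ := hn
  by_cases hv : v ∈ F
  · exact ⟨v, hv⟩
  · obtain ⟨u, hu, _⟩ := maxIndep_adj Γ F hF v hv
    exact ⟨u, hu⟩

/-- the pair condition -/
def GoodPair (Γ : SimpleGraph (Fin n)) (F G : Finset (Fin n)) : Prop :=
  IsMaxIndep Γ F ∧ IsMaxIndep Γ G ∧ Disjoint F G ∧
        (Γ.induce ((F ∪ G : Finset (Fin n)) : Set (Fin n))).Connected

lemma pair_of_singleton (Γ : SimpleGraph (Fin n)) (hiso : NoIsolated Γ) (i : Fin n)
    (hi : IsMaxIndep Γ {i}) : ∃ F G, GoodPair Γ F G := by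
  obtain ⟨j, hj⟩ := hiso i
  obtain ⟨G, hG, hGm⟩ := extend_indep Γ {j} (by
    intro a ha b hb; simp at ha hb; subst ha; subst hb; exact Γ.loopless.irrefl _)
  have hjG : j ∈ G := hG (by simp)
  have hiG : i ∉ G := fun h => hGm.1 i h j hjG hj
  refine ⟨{i}, G, hi, hGm, by simpa using hiG, ?_⟩
  have hi0 : i ∈ ((({i} : Finset (Fin n)) ∪ G : Finset (Fin n)) : Set (Fin n)) := by simp
  have key : ∀ v : ((({i} : Finset (Fin n)) ∪ G : Finset (Fin n)) : Set (Fin n)),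
      (Γ.induce ((({i} : Finset (Fin n)) ∪ G : Finset (Fin n)) : Set (Fin n))).Reachable v ⟨i, hi0⟩ := by
    rintro ⟨v, hv⟩
    by_cases hvi : v = i
    · subst hvi; rfl
    · obtain ⟨u, hu, huv⟩ := maxIndep_adj Γ {i} hi v (by simpa using hvi)
      simp at hu; subst hu
      apply SimpleGraph.Adj.reachable
      exact huv
  have : Nonempty ((({i} : Finset (Fin n)) ∪ G : Finset (Fin n)) : Set (Fin n)) := ⟨⟨i, hi0⟩⟩
  exact ⟨fun u v => (key u).trans (key v).symm⟩

lemma exists_mixed (Γ : SimpleGraph (Fin n)) (F G : Finset (Fin n)) (hF : IsMaxIndep Γ F)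
    (hG : IsMaxIndep Γ G) (hd : Disjoint F G) (hne : F.Nonempty)
    (hnc : ¬ (Γ.induce ((F ∪ G : Finset (Fin n)) : Set (Fin n))).Connected)
    (t : ℕ) (d : Fin n →₀ ℕ) (h1 : od F d < t) (h2 : od G d < t) :
    ∃ H, IsMaxIndep Γ H ∧ od H d < t ∧ (∃ i ∈ H, i ∈ F) ∧ (∃ j ∈ H, j ∈ G) := by
  classical
  set U : Set (Fin n) := ((F ∪ G : Finset (Fin n)) : Set (Fin n)) with hU
  have hUne : Nonempty U := by
    obtain ⟨i, hi⟩ := hne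
    exact ⟨⟨i, by simp [hU, hi]⟩⟩
  have hnp : ¬ (Γ.induce U).Preconnected := fun h => hnc ⟨h⟩
  unfold SimpleGraph.Preconnected at hnp
  push Not at hnp
  obtain ⟨u, v, huv⟩ := hnp
  let C : Fin n → Prop := fun w => ∃ h : w ∈ U, (Γ.induce U).Reachable u ⟨w, h⟩
  have hCadj : ∀ a b, a ∈ U → b ∈ U → Γ.Adj a b → C a → C b := by
    rintro a b ha hb hab ⟨h, hr⟩
    refine ⟨hb, hr.trans ?_⟩
    apply SimpleGraph.Adj.reachable
    exact hab
  have hFU : ∀ a, a ∈ F → a ∈ U := fun a h => by simp [hU, h]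
  have hGU : ∀ a, a ∈ G → a ∈ U := fun a h => by simp [hU, h]
  have hCu : C u := ⟨u.2, SimpleGraph.Reachable.refl _⟩
  have hCv : ¬ C v := fun ⟨h, hr⟩ => huv hr
  have hFG : ∀ a, a ∈ F → ∃ b ∈ G, Γ.Adj a b := fun a ha =>
    maxIndep_adj Γ G hG a (Finset.disjoint_left.1 hd ha)
  have hGF : ∀ a, a ∈ G → ∃ b ∈ F, Γ.Adj a b := fun a ha =>
    maxIndep_adj Γ F hF a (Finset.disjoint_right.1 hd ha)
  have neF1 : ∃ a ∈ F, C a := by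
    rcases Finset.mem_union.1 (Finset.mem_coe.1 u.2) with h | h
    · exact ⟨u, h, hCu⟩
    · obtain ⟨b, hb, hab⟩ := hGF _ h
      exact ⟨b, hb, hCadj _ _ (hGU _ h) (hFU _ hb) hab hCu⟩
  have neG1 : ∃ a ∈ G, C a := by
    obtain ⟨a, ha, hCa⟩ := neF1
    obtain ⟨b, hb, hab⟩ := hFG _ ha
    exact ⟨b, hb, hCadj _ _ (hFU _ ha) (hGU _ hb) hab hCa⟩
  have neF2 : ∃ a ∈ F, ¬ C a := by
    rcases Finset.mem_union.1 (Finset.mem_coe.1 v.2) with h | h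
    · exact ⟨v, h, hCv⟩
    · obtain ⟨b, hb, hab⟩ := hGF _ h
      exact ⟨b, hb, fun hc => hCv (hCadj _ _ (hFU _ hb) (hGU _ h) hab.symm hc)⟩
  have neG2 : ∃ a ∈ G, ¬ C a := by
    obtain ⟨a, ha, hCa⟩ := neF2
    obtain ⟨b, hb, hab⟩ := hFG _ ha
    exact ⟨b, hb, fun hc => hCa (hCadj _ _ (hGU _ hb) (hFU _ ha) hab.symm hc)⟩
  have ind : ∀ A B : Finset (Fin n), IsIndep Γ A → IsIndep Γ B → (∀ a ∈ A, a ∈ U) →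
      (∀ a ∈ B, a ∈ U) → IsIndep Γ (A.filter C ∪ B.filter (fun a => ¬ C a)) := by
    intro A B hA hB hAU hBU i hi j hj hij
    simp only [Finset.mem_union, Finset.mem_filter] at hi hj
    rcases hi with ⟨hi, ci⟩ | ⟨hi, ci⟩ <;> rcases hj with ⟨hj, cj⟩ | ⟨hj, cj⟩
    · exact hA i hi j hj hij
    · exact cj (hCadj _ _ (hAU _ hi) (hBU _ hj) hij ci)
    · exact ci (hCadj _ _ (hAU _ hj) (hBU _ hi) hij.symm cj)
    · exact hB i hi j hj hij
  obtain ⟨H1, hs1, hH1⟩ := extend_indep Γ _ (ind F G hF.1 hG.1 hFU hGU)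
  obtain ⟨H2, hs2, hH2⟩ := extend_indep Γ _ (ind G F hG.1 hF.1 hGU hFU)
  have hsum : ∑ i ∈ F, d i + ∑ i ∈ G, d i ≤ ∑ i ∈ H1, d i + ∑ i ∈ H2, d i := by
    rw [← Finset.sum_union hd, ← Finset.sum_union_inter]
    refine le_trans (Finset.sum_le_sum_of_subset ?_) (Nat.le_add_right _ _)
    intro a ha
    rw [Finset.mem_union] at ha ⊢
    by_cases hc : C a
    · rcases ha with ha | ha
      · left; exact hs1 (by simp [ha, hc])
      · right; exact hs2 (by simp [ha, hc])
    · rcases ha with ha | ha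
      · right; exact hs2 (by simp [ha, hc])
      · left; exact hs1 (by simp [ha, hc])
  have e1 := od_sum F d
  have e2 := od_sum G d
  have e3 := od_sum H1 d
  have e4 := od_sum H2 d
  obtain ⟨f1, hf1, cf1⟩ := neF1
  obtain ⟨f2, hf2, cf2⟩ := neF2
  obtain ⟨g1, hg1, cg1⟩ := neG1
  obtain ⟨g2, hg2, cg2⟩ := neG2
  have : od H1 d < t ∨ od H2 d < t := by omega
  rcases this with h | h
  · exact ⟨H1, hH1, h, ⟨f1, hs1 (by simp [hf1, cf1]), hf1⟩, ⟨g2, hs1 (by simp [hg2, cg2]), hg2⟩⟩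
  · exact ⟨H2, hH2, h, ⟨f2, hs2 (by simp [hf2, cf2]), hf2⟩, ⟨g1, hs2 (by simp [hg1, cg1]), hg1⟩⟩

lemma exists_weight (Γ : SimpleGraph (Fin n)) (F G : Finset (Fin n)) (hn : Nonempty (Fin n))
    (h : GoodPair Γ F G) (t : ℕ) (ht : F.card + G.card ≤ t) :
    ∃ a : Fin n →₀ ℕ, od F a < t ∧ od G a < t ∧
      ∀ H, IsMaxIndep Γ H → H ≠ F → H ≠ G → t ≤ od H a := by
  classical
  obtain ⟨hF, hG, hd, hc⟩ := h
  set U : Set (Fin n) := ((F ∪ G : Finset (Fin n)) : Set (Fin n)) with hU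
  obtain ⟨r⟩ := hc.nonempty
  have hFG : ∀ a ∈ U, (a ∈ F ∧ a ∉ G) ∨ (a ∉ F ∧ a ∈ G) := by
    intro a ha
    rcases Finset.mem_union.1 (Finset.mem_coe.1 ha) with h | h
    · exact Or.inl ⟨h, Finset.disjoint_left.1 hd h⟩
    · exact Or.inr ⟨Finset.disjoint_right.1 hd h, h⟩
  have hpar : ∀ v : U, ∃ w : U, Γ.Adj v w ∧
      (v ≠ r → (Γ.induce U).dist w r < (Γ.induce U).dist v r) := by
    intro v
    by_cases hv : v = r
    · subst hv
      rcases hFG v v.2 with h | h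
      · obtain ⟨w, hw, hvw⟩ := maxIndep_adj Γ G hG v h.2
        exact ⟨⟨w, by simp [hU, hw]⟩, hvw, fun h => absurd rfl h⟩
      · obtain ⟨w, hw, hvw⟩ := maxIndep_adj Γ F hF v h.1
        exact ⟨⟨w, by simp [hU, hw]⟩, hvw, fun h => absurd rfl h⟩
    · obtain ⟨p, hp⟩ := hc.exists_walk_length_eq_dist v r
      cases p with
      | nil => exact absurd rfl hv
      | @cons _ w _ hvw q =>
        refine ⟨w, hvw, fun _ => ?_⟩
        have := SimpleGraph.dist_le q
        rw [SimpleGraph.Walk.length_cons] at hp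
        omega
  choose p hpa hpd using hpar
  let ω : U → ℕ := fun v => if v = r then t - (F.card + G.card) else 1
  have hω : ∑ v, ω v + 1 = t := by
    have hcard : Fintype.card U = F.card + G.card := by
      rw [← Finset.card_union_of_disjoint hd]
      simp [hU]
    have : ∑ v ∈ Finset.univ.erase r, ω v = Fintype.card U - 1 := by
      rw [Finset.sum_congr rfl (g := fun _ => 1)]
      · simp [Finset.card_erase_of_mem]
      · intro v hv
        simp [ω, Finset.ne_of_mem_erase hv]
    rw [← Finset.sum_erase_add _ _ (Finset.mem_univ r), this]
    have hpos : 0 < Fintype.card U := Fintype.card_pos_iff.2 ⟨r⟩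
    simp only [ω, if_true]
    omega
  let a : Fin n →₀ ℕ := ∑ v : U, (Finsupp.single (v : Fin n) (ω v) + Finsupp.single (p v : Fin n) (ω v))
  have hsing : ∀ (H : Finset (Fin n)) (i : Fin n) (s : ℕ),
      od H (Finsupp.single i s) = if i ∈ H then 0 else s := by
    intro H i s
    split_ifs with h
    · exact od_single_mem H i h s
    · exact od_single_not_mem H i h s
  have hoda : ∀ H : Finset (Fin n), od H a = ∑ v : U, ((if (v : Fin n) ∈ H then 0 else ω v) +
      (if (p v : Fin n) ∈ H then 0 else ω v)) := by
    intro H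
    have : od H a = ∑ v : U, od H (Finsupp.single (v : Fin n) (ω v) + Finsupp.single (p v : Fin n) (ω v)) := by
      simp only [a, od]
      rw [Finset.sum_comm]
      simp [Finsupp.finsetSum_apply]
    rw [this]
    refine Finset.sum_congr rfl fun v _ => ?_
    rw [od_add, hsing, hsing]
  refine ⟨a, ?_, ?_, ?_⟩
  · rw [hoda]
    have : ∀ v : U, ((if (v : Fin n) ∈ F then 0 else ω v) + (if (p v : Fin n) ∈ F then 0 else ω v))
        = ω v := by
      intro v
      have := hFG v v.2
      have h2 := hFG (p v) (p v).2
      have h3 := fun h h' => hF.1 v h (p v) h' (hpa v)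
      have h4 := fun h h' => hG.1 v h (p v) h' (hpa v)
      grind
    simp only [this]; omega
  · rw [hoda]
    have : ∀ v : U, ((if (v : Fin n) ∈ G then 0 else ω v) + (if (p v : Fin n) ∈ G then 0 else ω v))
        = ω v := by
      intro v
      have := hFG v v.2
      have h2 := hFG (p v) (p v).2
      have h3 := fun h h' => hF.1 v h (p v) h' (hpa v)
      have h4 := fun h h' => hG.1 v h (p v) h' (hpa v)
      grind
    simp only [this]; omega
  · intro H hH hHF hHG
    rw [hoda]
    by_contra hlt
    have hle : ∀ v : U, ω v ≤ ((if (v : Fin n) ∈ H then 0 else ω v) +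
        (if (p v : Fin n) ∈ H then 0 else ω v)) := by
      intro v
      have h3 := fun h h' => hH.1 v h (p v) h' (hpa v)
      grind
    have heq : ∀ v : U, ω v = ((if (v : Fin n) ∈ H then 0 else ω v) +
        (if (p v : Fin n) ∈ H then 0 else ω v)) := by
      have := (Finset.sum_eq_sum_iff_of_le (s := Finset.univ) (fun v _ => hle v)).1
        (le_antisymm (Finset.sum_le_sum fun v _ => hle v) (by omega))
      intro v; exact this v (Finset.mem_univ v)
    have hiff : ∀ v : U, v ≠ r → ((v : Fin n) ∈ H ↔ (p v : Fin n) ∉ H) := by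
      intro v hv
      have h1 := heq v
      have : ω v = 1 := by simp [ω, hv]
      rw [this] at h1
      grind
    have hiffF : ∀ v : U, ((v : Fin n) ∈ F ↔ (p v : Fin n) ∉ F) := by
      intro v
      have := hFG v v.2
      have h2 := hFG (p v) (p v).2
      have h3 := fun h h' => hF.1 v h (p v) h' (hpa v)
      have h4 := fun h h' => hG.1 v h (p v) h' (hpa v)
      grind
    have hprop : ∀ N, ∀ v : U, (Γ.induce U).dist v r < N →
        ((((v : Fin n) ∈ H) ↔ ((v : Fin n) ∈ F)) ↔ (((r : Fin n) ∈ H) ↔ ((r : Fin n) ∈ F))) := by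
      intro N
      induction N with
      | zero => intro v h; omega
      | succ N ih =>
        intro v hv
        by_cases hvr : v = r
        · rw [hvr]
        · have := ih (p v) (by have := hpd v hvr; omega)
          have h1 := hiff v hvr
          have h2 := hiffF v
          tauto
    by_cases hr : ((r : Fin n) ∈ H) ↔ ((r : Fin n) ∈ F)
    · apply hHF
      apply hF.2 H hH.1
      intro v hv
      have hvU : v ∈ U := by simp [hU, hv]
      exact (((hprop _ ⟨v, hvU⟩ (Nat.lt_succ_self _)).2 hr).2 hv)
    · apply hHG
      apply hG.2 H hH.1
      intro v hv
      have hvU : v ∈ U := by simp [hU, hv]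
      have := hprop _ ⟨v, hvU⟩ (Nat.lt_succ_self _)
      have h2 := Finset.disjoint_right.1 hd hv
      simp only at this
      tauto
end comb

section poly
variable {n : ℕ} (k : Type) [Field k]

/-- generalized symbolic power -/
def symbS (S : Set (Finset (Fin n))) (t : ℕ) : Ideal (MvPolynomial (Fin n) k) :=
  ⨅ F ∈ S, PF k F ^ t

lemma PF_pow_le (F : Finset (Fin n)) (t : ℕ) :
    PF k F ^ t ≤ Ideal.span ((fun m => monomial m (1 : k)) '' {m : Fin n →₀ ℕ | t ≤ od F m}) := by
  induction t with
  | zero =>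
    rw [pow_zero, Ideal.one_eq_top, top_le_iff, Ideal.eq_top_iff_one]
    exact Ideal.subset_span ⟨0, by simp, by simp⟩
  | succ t ih =>
    rw [pow_succ]
    refine (Ideal.mul_mono_left ih).trans ?_
    unfold PF
    rw [Ideal.span_mul_span', Ideal.span_le]
    rintro _ ⟨_, ⟨m, hm, rfl⟩, _, ⟨i, hi, rfl⟩, rfl⟩
    refine Ideal.subset_span ⟨m + Finsupp.single i 1, ?_, ?_⟩
    · simp only [Set.mem_setOf_eq] at hm ⊢
      rw [od_add, od_single_not_mem F i hi]; omega
    · simp [X, monomial_mul]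

lemma mono_mem_PF_pow (F : Finset (Fin n)) (t : ℕ) : ∀ (m : Fin n →₀ ℕ), t ≤ od F m →
    monomial m (1 : k) ∈ PF k F ^ t := by
  induction t with
  | zero => intro m _; simp
  | succ t ih =>
    intro m hm
    have : ∃ i ∈ Fᶜ, m i ≠ 0 := by
      by_contra hcon
      push Not at hcon
      have : od F m = 0 := Finset.sum_eq_zero hcon
      omega
    obtain ⟨i, hi, hmi⟩ := this
    have hi' : i ∉ F := by simpa using hi
    have hle : Finsupp.single i 1 ≤ m := by
      rw [Finsupp.single_le_iff]; omega
    have e : m = (m - Finsupp.single i 1) + Finsupp.single i 1 := (tsub_add_cancel_of_le hle).symm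
    have h2 : t ≤ od F (m - Finsupp.single i 1) := by
      rw [e, od_add, od_single_not_mem F i hi'] at hm; omega
    have h3 : monomial m (1 : k) = monomial (m - Finsupp.single i 1) 1 * X i := by
      conv_lhs => rw [e]
      simp [X, monomial_mul]
    rw [h3, pow_succ]
    exact Ideal.mul_mem_mul (ih _ h2) (Ideal.subset_span ⟨i, hi', rfl⟩)

lemma mem_PF_pow (F : Finset (Fin n)) (t : ℕ) (f : MvPolynomial (Fin n) k) :
    f ∈ PF k F ^ t ↔ ∀ m, coeff m f ≠ 0 → t ≤ od F m := by
  constructor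
  · intro hf m hm
    have := mem_ideal_span_monomial_image.1 (PF_pow_le k F t hf) m (by simpa using hm)
    obtain ⟨m', hm', hle⟩ := this
    exact le_trans hm' (od_mono F hle)
  · intro h
    rw [f.as_sum]
    refine Ideal.sum_mem _ fun m hm => ?_
    have : monomial m (coeff m f) = C (coeff m f) * monomial m 1 := by
      rw [C_mul_monomial, mul_one]
    rw [this]
    exact Ideal.mul_mem_left _ _ (mono_mem_PF_pow k F t m (h m (by simpa using hm)))

lemma mem_symbS (S : Set (Finset (Fin n))) (t : ℕ) (f : MvPolynomial (Fin n) k) :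
    f ∈ symbS k S t ↔ ∀ m, coeff m f ≠ 0 → ∀ F ∈ S, t ≤ od F m := by
  simp only [symbS, Ideal.mem_iInf, mem_PF_pow]
  exact ⟨fun h m hm F hF => h F hF m hm, fun h F hF m hm => h m hm F hF⟩

lemma coeff_Xpow (i : Fin n) (s : ℕ) (m : Fin n →₀ ℕ) (f : MvPolynomial (Fin n) k) :
    coeff (Finsupp.single i s + m) (X i ^ s * f) = coeff m f := by
  rw [X_pow_eq_monomial, coeff_monomial_mul, one_mul]

lemma coeff_Xpow_ne (i : Fin n) (s : ℕ) (m : Fin n →₀ ℕ) (f : MvPolynomial (Fin n) k)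
    (h : coeff m (X i ^ s * f) ≠ 0) : s ≤ m i ∧ ∃ m', m = Finsupp.single i s + m' ∧ coeff m' f ≠ 0 := by
  rw [X_pow_eq_monomial, coeff_monomial_mul'] at h
  split_ifs at h with hle
  · refine ⟨by simpa using hle i, m - Finsupp.single i s, (add_tsub_cancel_of_le hle).symm, ?_⟩
    simpa using h
  · exact absurd rfl h

lemma Xpow_mem (i : Fin n) (s : ℕ) : (X i : MvPolynomial (Fin n) k) ^ s ∈ maxIdeal k (Fin n) ^ s := by
  have h : (X i : MvPolynomial (Fin n) k) ∈ maxIdeal k (Fin n) :=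
    Ideal.subset_span (Set.mem_range_self i)
  exact Ideal.pow_mem_pow h s

lemma symbS_sat (S : Set (Finset (Fin n))) (hS : ∀ F ∈ S, F.Nonempty) (t s : ℕ)
    (f : MvPolynomial (Fin n) k) (h : ∀ r ∈ maxIdeal k (Fin n) ^ s, r * f ∈ symbS k S t) :
    f ∈ symbS k S t := by
  rw [mem_symbS]
  intro m hm F hF
  obtain ⟨i, hi⟩ := hS F hF
  have := (mem_symbS k S t _).1 (h _ (Xpow_mem k i s)) (Finsupp.single i s + m)
    (by rwa [coeff_Xpow]) F hF
  rwa [od_add, od_single_mem F i hi, zero_add] at this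

lemma exists_pow_le_span (N : ℕ) : ∃ s, maxIdeal k (Fin n) ^ s ≤
    Ideal.span (Set.range fun i : Fin n => (X i : MvPolynomial (Fin n) k) ^ N) := by
  apply Ideal.exists_pow_le_of_le_radical_of_fg
  · unfold maxIdeal
    rw [Ideal.span_le]
    rintro _ ⟨i, rfl⟩
    exact ⟨N, Ideal.subset_span ⟨i, rfl⟩⟩
  · exact Submodule.fg_span (Set.finite_range _)

open Classical in
lemma key_global (Γ : SimpleGraph (Fin n)) (hiso : NoIsolated Γ) (hn : Nonempty (Fin n))
    (hno : ¬ ∃ F G, GoodPair Γ F G) (t s : ℕ) (f : Fin n → MvPolynomial (Fin n) k)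
    (hc : ∀ i j, X j ^ s * f i - X i ^ s * f j ∈ symbPow k Γ t) :
    ∃ g, ∀ i, X i ^ t * (f i - X i ^ s * g) ∈ symbPow k Γ t := by
  have hmem : ∀ p, p ∈ symbPow k Γ t ↔ ∀ m, coeff m p ≠ 0 → ∀ F, IsMaxIndep Γ F → t ≤ od F m :=
    fun p => mem_symbS k _ t p
  let c : Fin n → (Fin n →₀ ℕ) → k := fun i d => coeff (Finsupp.single i s + d) (f i)
  -- agreement within a facet
  have hagree : ∀ d H, IsMaxIndep Γ H → od H d < t → ∀ i ∈ H, ∀ j ∈ H, c i d = c j d := by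
    intro d H hH hd i hi j hj
    by_contra hne
    have := (hmem _).1 (hc i j) (Finsupp.single i s + (Finsupp.single j s + d)) (by
      rw [coeff_sub, coeff_Xpow, add_left_comm, coeff_Xpow]
      exact sub_ne_zero.2 hne) H hH
    rw [od_add, od_add, od_single_mem H i hi, od_single_mem H j hj] at this
    omega
  have hagree2 : ∀ d F G, IsMaxIndep Γ F → IsMaxIndep Γ G → od F d < t → od G d < t →
      ∀ i ∈ F, ∀ j ∈ G, c i d = c j d := by
    intro d F G hF hG hFd hGd i hi j hj
    by_cases hdis : Disjoint F G
    · by_cases hcon : (Γ.induce ((F ∪ G : Finset (Fin n)) : Set (Fin n))).Connected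
      · exact absurd ⟨F, G, hF, hG, by convert hdis, by convert hcon⟩ hno
      · obtain ⟨H, hH, hHd, ⟨i', hi'H, hi'F⟩, ⟨j', hj'H, hj'G⟩⟩ :=
          exists_mixed Γ F G hF hG hdis ⟨i, hi⟩ (by convert hcon) t d hFd hGd
        rw [hagree d F hF hFd i hi i' hi'F, hagree d H hH hHd i' hi'H j' hj'H,
          hagree d G hG hGd j' hj'G j hj]
    · rw [Finset.not_disjoint_iff] at hdis
      obtain ⟨l, hlF, hlG⟩ := hdis
      rw [hagree d F hF hFd i hi l hlF, hagree d G hG hGd l hlG j hj]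
  let c0 : (Fin n →₀ ℕ) → k := fun d =>
    if h : ∃ j H, IsMaxIndep Γ H ∧ od H d < t ∧ j ∈ H then c h.choose d else 0
  have hc0 : ∀ d H, IsMaxIndep Γ H → od H d < t → ∀ i ∈ H, c0 d = c i d := by
    intro d H hH hd i hi
    have h : ∃ j H, IsMaxIndep Γ H ∧ od H d < t ∧ j ∈ H := ⟨i, H, hH, hd, hi⟩
    simp only [c0, dif_pos h]
    obtain ⟨H', hH', hd', hj⟩ := h.choose_spec
    exact hagree2 d H' H hH' hH hd' hd _ hj _ hi
  let D : Finset (Fin n →₀ ℕ) := Finset.univ.biUnion fun i : Fin n =>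
    (f i).support.image fun e => e - Finsupp.single i s
  let g : MvPolynomial (Fin n) k := ∑ d ∈ D, monomial d (c0 d)
  have hg : ∀ d H, IsMaxIndep Γ H → od H d < t → ∀ i ∈ H, coeff d g = c i d := by
    intro d H hH hd i hi
    have e : coeff d g = if d ∈ D then c0 d else 0 := by
      simp only [g, coeff_sum, coeff_monomial, Finset.sum_ite_eq']
    rw [e]
    split_ifs with hD
    · exact hc0 d H hH hd i hi
    · by_contra hne
      apply hD
      simp only [D, Finset.mem_biUnion, Finset.mem_univ, true_and, Finset.mem_image]
      refine ⟨i, Finsupp.single i s + d, ?_, by simp⟩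
      rw [mem_support_iff]
      exact Ne.symm hne
  refine ⟨g, fun i => (hmem _).2 fun m hm H hH => ?_⟩
  obtain ⟨hle, e, rfl, he⟩ := coeff_Xpow_ne k i t m _ hm
  rw [od_add]
  by_cases hiH : i ∈ H
  · rw [od_single_mem H i hiH, zero_add]
    by_contra hlt
    push Not at hlt
    by_cases hs : s ≤ e i
    · have hle : Finsupp.single i s ≤ e := by rwa [Finsupp.single_le_iff]
      obtain ⟨d, rfl⟩ := exists_add_of_le hle
      rw [od_add, od_single_mem H i hiH, zero_add] at hlt
      apply he
      rw [coeff_sub, coeff_Xpow, hg d H hH hlt i hiH, sub_self]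
    · have h0 : ∀ q : MvPolynomial (Fin n) k, coeff e (X i ^ s * q) = 0 := by
        intro q
        by_contra hne
        exact hs (coeff_Xpow_ne k i s e q hne).1
      rw [coeff_sub, h0, sub_zero] at he
      have : ∃ j ∈ H, j ≠ i := by
        by_contra hcon
        push Not at hcon
        have : H = {i} := by
          ext j; simp only [Finset.mem_singleton]
          exact ⟨hcon j, fun h => h ▸ hiH⟩
        subst this
        exact hno (pair_of_singleton Γ hiso i hH)
      obtain ⟨j, hj, hji⟩ := this
      have := (hmem _).1 (hc i j) (Finsupp.single j s + e) (by
        rw [coeff_sub, coeff_Xpow]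
        have : coeff (Finsupp.single j s + e) (X i ^ s * f j) = 0 := by
          by_contra hne
          have := (coeff_Xpow_ne k i s _ _ hne).1
          rw [Finsupp.add_apply, Finsupp.single_apply, if_neg hji] at this
          omega
        rwa [this, sub_zero]) H hH
      rw [od_add, od_single_mem H j hj] at this
      omega
  · rw [od_single_not_mem H i hiH]; omega

end poly

section glue

lemma nontriv_of_split {R : Type} [CommRing R] (I J1 J2 : Ideal R)
    (h1 : ∀ s f, (∀ r ∈ I ^ s, r * f ∈ J1) → f ∈ J1)
    (h2 : ∀ s f, (∀ r ∈ I ^ s, r * f ∈ J2) → f ∈ J2)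
    (x : R) (hx : x ∉ J1 ⊔ J2) (s : ℕ) (hs : ∀ r ∈ I ^ s, r * x ∈ J1 ⊔ J2) :
    Nontrivial ((localCohomology I 1).obj (ModuleCat.of R (R ⧸ (J1 ⊓ J2)))) := by
  have hdec : ∀ r : ↥(I ^ s), ∃ a : R, a ∈ J1 ∧ (r : R) * x - a ∈ J2 := by
    intro r
    obtain ⟨a, ha, b, hb, hab⟩ := Submodule.mem_sup.1 (hs r r.2)
    exact ⟨a, ha, by rw [← hab]; simpa using hb⟩
  choose A hA1 hA2 using hdec
  let φ : ↥(I ^ s) →ₗ[R] (R ⧸ (J1 ⊓ J2)) :=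
    { toFun := fun r => Ideal.Quotient.mk (J1 ⊓ J2) (A r)
      map_add' := by
        intro a b
        rw [← map_add, Ideal.Quotient.eq]
        refine ⟨J1.sub_mem (hA1 _) (J1.add_mem (hA1 _) (hA1 _)), ?_⟩
        have := J2.sub_mem (J2.add_mem (hA2 a) (hA2 b)) (hA2 (a + b))
        have e : A (a + b) - (A a + A b) = (a : R) * x - A a + ((b : R) * x - A b) -
          (((a + b : ↥(I ^ s)) : R) * x - A (a + b)) := by
          rw [Submodule.coe_add]; ring
        rw [e]; exact this
      map_smul' := by
        intro c a
        change _ = Ideal.Quotient.mk (J1 ⊓ J2) (c * A a)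
        rw [Ideal.Quotient.eq]
        refine ⟨J1.sub_mem (hA1 _) (J1.mul_mem_left _ (hA1 _)), ?_⟩
        have := J2.sub_mem (J2.mul_mem_left c (hA2 a)) (hA2 (c • a))
        have e : A (c • a) - c * A a = c * ((a : R) * x - A a) -
          (((c • a : ↥(I ^ s)) : R) * x - A (c • a)) := by
          rw [Submodule.coe_smul, smul_eq_mul]; ring
        rw [e]; exact this }
  refine lc1_nontriv I _ s φ fun s' hs' u hu => ?_
  obtain ⟨u, rfl⟩ := Ideal.Quotient.mk_surjective u
  have hu' : ∀ r (hr : r ∈ I ^ s'), A ⟨r, Ideal.pow_le_pow_right hs' hr⟩ - r * u ∈ J1 ⊓ J2 := by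
    intro r hr
    rw [← Ideal.Quotient.eq]
    exact hu r hr
  have hu1 : u ∈ J1 := h1 s' u fun r hr => by
    have := J1.sub_mem (hA1 ⟨r, Ideal.pow_le_pow_right hs' hr⟩) (hu' r hr).1
    simpa using this
  have hu2 : x - u ∈ J2 := h2 s' _ fun r hr => by
    have := J2.add_mem (hA2 ⟨r, Ideal.pow_le_pow_right hs' hr⟩) (hu' r hr).2
    have e : r * (x - u) = r * x - A ⟨r, Ideal.pow_le_pow_right hs' hr⟩ +
      (A ⟨r, Ideal.pow_le_pow_right hs' hr⟩ - r * u) := by ring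
    rw [e]; exact this
  apply hx
  have := Submodule.add_mem_sup hu1 hu2
  simpa using this

variable {n : ℕ} (k : Type) [Field k]

lemma locCoh_zero_sub (Γ : SimpleGraph (Fin n)) (hn : Nonempty (Fin n)) (t : ℕ) :
    Subsingleton (locCoh k (symbPow k Γ t) 0) := by
  refine lc0_sub _ _ fun s x hx => ?_
  change MvPolynomial (Fin n) k ⧸ symbPow k Γ t at x
  obtain ⟨f, rfl⟩ := Ideal.Quotient.mk_surjective x
  refine Ideal.Quotient.eq_zero_iff_mem.2 ?_
  refine symbS_sat k {F | IsMaxIndep Γ F} (fun F hF => maxIndep_nonempty Γ hn F hF) t s f ?_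
  intro r hr
  exact Ideal.Quotient.eq_zero_iff_mem.1 (hx r hr)

lemma locCoh_one_sub (Γ : SimpleGraph (Fin n)) (hiso : NoIsolated Γ) (hn : Nonempty (Fin n))
    (hno : ¬ ∃ F G, GoodPair Γ F G) (t : ℕ) :
    Subsingleton (locCoh k (symbPow k Γ t) 1) := by
  refine lc1_sub _ _ fun s φ => ?_
  change ↥(maxIdeal k (Fin n) ^ s) →ₗ[MvPolynomial (Fin n) k]
    MvPolynomial (Fin n) k ⧸ symbPow k Γ t at φ
  have hf : ∀ i, ∃ f, Ideal.Quotient.mk (symbPow k Γ t) f = φ ⟨X i ^ s, Xpow_mem k i s⟩ :=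
    fun i => Ideal.Quotient.mk_surjective _
  choose f hf using hf
  have hsm : ∀ a b, a • Ideal.Quotient.mk (symbPow k Γ t) b = Ideal.Quotient.mk (symbPow k Γ t) (a * b) :=
    fun a b => rfl
  obtain ⟨g, hg⟩ := key_global k Γ hiso hn hno t s f (by
    intro i j
    rw [← Ideal.Quotient.eq, ← hsm, ← hsm, hf, hf, ← map_smul, ← map_smul]
    congr 1
    ext1
    exact mul_comm _ _)
  let u : MvPolynomial (Fin n) k ⧸ symbPow k Γ t := Ideal.Quotient.mk _ g
  let L : ↥(maxIdeal k (Fin n) ^ s) →ₗ[MvPolynomial (Fin n) k]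
      MvPolynomial (Fin n) k ⧸ symbPow k Γ t :=
    φ - (LinearMap.toSpanSingleton _ _ u).comp (Submodule.subtype _)
  let K : Ideal (MvPolynomial (Fin n) k) := (LinearMap.ker L).map (Submodule.subtype _)
  obtain ⟨s', hs'⟩ := exists_pow_le_span (n := n) k (t + s)
  have hK : maxIdeal k (Fin n) ^ s' ≤ K := by
    refine hs'.trans (Ideal.span_le.2 ?_)
    rintro _ ⟨i, rfl⟩
    refine ⟨(X i ^ t : MvPolynomial (Fin n) k) •
      (⟨X i ^ s, Xpow_mem k i s⟩ : ↥(maxIdeal k (Fin n) ^ s)), ?_, ?_⟩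
    · change L _ = 0
      rw [map_smul]
      change (X i ^ t : MvPolynomial (Fin n) k) • (φ ⟨X i ^ s, Xpow_mem k i s⟩ - (X i ^ s : MvPolynomial (Fin n) k) • u) = 0
      rw [← hf, hsm, ← map_sub, hsm]
      exact Ideal.Quotient.eq_zero_iff_mem.2 (hg i)
    · change X i ^ t * X i ^ s = _
      rw [← pow_add]
  refine ⟨max s s', le_max_left _ _, u, fun r hr => ?_⟩
  obtain ⟨y, hy, hyr⟩ := hK (Ideal.pow_le_pow_right (le_max_right s s') hr)
  have hy' : y = ⟨r, Ideal.pow_le_pow_right (le_max_left s s') hr⟩ := Subtype.ext hyr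
  rw [hy'] at hy
  exact sub_eq_zero.1 hy

lemma locCoh_one_nontriv (Γ : SimpleGraph (Fin n)) (hn : Nonempty (Fin n))
    (F G : Finset (Fin n)) (h : GoodPair Γ F G) (t : ℕ) (ht : F.card + G.card ≤ t) :
    Nontrivial (locCoh k (symbPow k Γ t) 1) := by
  obtain ⟨a, haF, haG, haH⟩ := exists_weight Γ F G hn h t ht
  obtain ⟨hF, hG, hd, -⟩ := h
  have hFne := maxIndep_nonempty Γ hn F hF
  have hGF : G ≠ F := by
    rintro rfl
    obtain ⟨i, hi⟩ := hFne
    exact Finset.disjoint_left.1 hd hi hi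
  let J1 := symbS k {F} t
  let J2 := symbS k {H | IsMaxIndep Γ H ∧ H ≠ F} t
  have hJ : symbPow k Γ t = J1 ⊓ J2 := by
    ext f
    rw [Submodule.mem_inf]
    refine (mem_symbS k {F | IsMaxIndep Γ F} t f).trans ?_
    rw [mem_symbS, mem_symbS]
    constructor
    · intro h
      exact ⟨fun m hm H hH => by
        rw [Set.mem_singleton_iff] at hH; subst hH; exact h m hm _ hF,
        fun m hm H hH => h m hm H hH.1⟩
    · rintro ⟨h1, h2⟩ m hm H hH
      by_cases hHF : H = F
      · exact h1 m hm H hHF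
      · exact h2 m hm H ⟨hH, hHF⟩
  obtain ⟨s, hs⟩ := exists_pow_le_span (n := n) k t
  rw [hJ]
  refine nontriv_of_split _ J1 J2 ?_ ?_ (monomial a 1) ?_ s ?_
  · intro s f
    exact symbS_sat k _ (by rintro H rfl; exact hFne) t s f
  · intro s f
    exact symbS_sat k _ (fun H hH => maxIndep_nonempty Γ hn H hH.1) t s f
  · intro hx
    obtain ⟨p, hp, q, hq, hpq⟩ := Submodule.mem_sup.1 hx
    have e : coeff a p + coeff a q = 1 := by
      rw [← coeff_add, hpq, coeff_monomial, if_pos rfl]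
    by_cases hp0 : coeff a p = 0
    · have hq0 : coeff a q ≠ 0 := by
        intro h; rw [hp0, h] at e; simp at e
      have := (mem_symbS k _ t q).1 hq a hq0 G ⟨hG, hGF⟩
      omega
    · have := (mem_symbS k _ t p).1 hp a hp0 F rfl
      omega
  · intro r hr
    have hle : Ideal.span (Set.range fun i : Fin n => (X i : MvPolynomial (Fin n) k) ^ t) ≤
        (J1 ⊔ J2).colon {monomial a (1 : k)} := by
      rw [Ideal.span_le]
      rintro _ ⟨i, rfl⟩
      rw [SetLike.mem_coe, Submodule.mem_colon_singleton]
      change X i ^ t * monomial a (1 : k) ∈ J1 ⊔ J2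
      have hco : ∀ m, coeff m (X i ^ t * monomial a (1 : k)) ≠ 0 → m = Finsupp.single i t + a := by
        intro m hm
        obtain ⟨-, m', rfl, h⟩ := coeff_Xpow_ne k i t m _ hm
        rw [coeff_monomial] at h
        split_ifs at h with h'
        · rw [h']
        · exact absurd rfl h
      by_cases hi : i ∈ F
      · refine Submodule.mem_sup_right ((mem_symbS k _ t _).2 fun m hm H hH => ?_)
        rw [hco m hm, od_add]
        by_cases hHG : H = G
        · rw [od_single_not_mem H i (hHG ▸ Finset.disjoint_left.1 hd hi)]; omega
        · have := haH H hH.1 hH.2 hHG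
          omega
      · refine Submodule.mem_sup_left ((mem_symbS k _ t _).2 fun m hm H hH => ?_)
        rw [Set.mem_singleton_iff] at hH
        rw [hco m hm, od_add, hH, od_single_not_mem F i hi]; omega
    have := hle (hs hr)
    rw [Submodule.mem_colon_singleton] at this
    exact this

lemma rDepth_eq_one (J : Ideal (MvPolynomial (Fin n) k)) (h0 : Subsingleton (locCoh k J 0)) :
    rDepth k J = 1 ↔ Nontrivial (locCoh k J 1) := by
  unfold rDepth
  have h0' : ¬ Nontrivial (locCoh k J 0) := not_nontrivial_iff_subsingleton.2 h0
  constructor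
  · intro h
    have hne : { i | Nontrivial (locCoh k J i) }.Nonempty := by
      by_contra hcon
      rw [Set.not_nonempty_iff_eq_empty] at hcon
      rw [hcon, Nat.sInf_empty] at h
      omega
    have := Nat.sInf_mem hne
    rw [h] at this
    exact this
  · intro h
    apply le_antisymm
    · exact Nat.sInf_le h
    · by_contra hlt
      have hne : { i | Nontrivial (locCoh k J i) }.Nonempty := ⟨1, h⟩
      have := Nat.sInf_mem hne
      have e : sInf { i | Nontrivial (locCoh k J i) } = 0 := by omega
      rw [e] at this
      exact h0' this

end glue

/-- Let `Γ` be a connected graph. There exists `t ≥ 1` with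
`depth R/I^{(t)} = 1` if and only if `Γ` has two disjoint maximal independent sets
`F, G` with `Γ_{F ∪ G}` connected; in this case `depth R/I^{(t)} = 1` for all
`t ≥ |F| + |G|`. -/
theorem stmt6 (k : Type) [Field k] (n : ℕ) (Γ : SimpleGraph (Fin n))
    (hiso : NoIsolated Γ) (hconn : Γ.Connected) :
    ((∃ t : ℕ, 1 ≤ t ∧ rDepth k (symbPow k Γ t) = 1) ↔
      ∃ F G : Finset (Fin n), IsMaxIndep Γ F ∧ IsMaxIndep Γ G ∧ Disjoint F G ∧
        (Γ.induce ((F ∪ G : Finset (Fin n)) : Set (Fin n))).Connected) ∧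
    (∀ F G : Finset (Fin n), IsMaxIndep Γ F → IsMaxIndep Γ G → Disjoint F G →
      (Γ.induce ((F ∪ G : Finset (Fin n)) : Set (Fin n))).Connected →
      ∀ t : ℕ, F.card + G.card ≤ t → rDepth k (symbPow k Γ t) = 1) := by
  have hn : Nonempty (Fin n) := hconn.nonempty
  have hd : ∀ t, rDepth k (symbPow k Γ t) = 1 ↔ Nontrivial (locCoh k (symbPow k Γ t) 1) :=
    fun t => rDepth_eq_one k _ (locCoh_zero_sub k Γ hn t)
  refine ⟨⟨?_, ?_⟩, ?_⟩
  · rintro ⟨t, -, ht⟩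
    by_contra hno
    have h1 := (hd t).1 ht
    exact (not_nontrivial_iff_subsingleton.2 (locCoh_one_sub k Γ hiso hn hno t)) h1
  · rintro ⟨F, G, hF, hG, hdis, hc⟩
    have hpos := (maxIndep_nonempty Γ hn F hF).card_pos
    exact ⟨F.card + G.card, by omega,
      (hd _).2 (locCoh_one_nontriv k Γ hn F G ⟨hF, hG, hdis, hc⟩ _ le_rfl)⟩
  · intro F G hF hG hdis hc t ht
    exact (hd t).2 (locCoh_one_nontriv k Γ hn F G ⟨hF, hG, hdis, hc⟩ t ht)

end
end

section
/- Let Γ be a connected non-bipartite graph such that the vertex set of every odd cycle of Γ is a dominating set. Then for every t ≥ 1, every associated prime p of R/I^t with p ≠ m is a minimal prime of I. -/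
open MvPolynomial

noncomputable section

theorem exists_oddCycle {V : Type} (G : SimpleGraph V) (h : ¬ G.Colorable 2) :
    ∃ (m : ℕ) (c : ZMod m → V), IsOddCycle G m c := by
  classical
  rw [SimpleGraph.two_colorable_iff_forall_loop_even] at h
  push Not at h
  have hex : ∃ m : ℕ, ∃ u, ∃ w : G.Walk u u, Odd w.length ∧ w.length = m := by
    obtain ⟨u, w, hw⟩ := h
    exact ⟨_, u, w, by simpa using hw, rfl⟩
  obtain ⟨u, w, hodd, hlen⟩ := Nat.find_spec hex
  have hmin : ∀ (x : V) (w' : G.Walk x x), w'.length < w.length → ¬ Odd w'.length := by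
    intro x w' hlt ho
    exact Nat.find_min hex (hlen ▸ hlt) ⟨x, w', ho, rfl⟩
  clear hlen
  have hinj : ∀ i j, i < j → j < w.length → w.getVert i ≠ w.getVert j := by
    intro i j hij hj he
    have h1 := hmin _ ((w.take i).append ((w.drop j).copy he.symm rfl)) (by
      simp; omega)
    have h2 := hmin _ (((w.drop i).take (j - i)).copy rfl (by
      rw [SimpleGraph.Walk.drop_getVert, he]; congr 1; omega)) (by simp; omega)
    simp only [SimpleGraph.Walk.length_append, SimpleGraph.Walk.length_copy,
      SimpleGraph.Walk.take_length, SimpleGraph.Walk.drop_length, Nat.not_odd_iff_even,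
      Nat.even_iff] at h1 h2
    rw [Nat.odd_iff] at hodd
    omega
  have h3 : 3 ≤ w.length := by
    by_contra hlt
    have h1 : w.length = 1 := by
      rw [Nat.odd_iff] at hodd
      omega
    have := w.adj_getVert_succ (i := 0) (by omega)
    rw [zero_add, ← h1, w.getVert_length, w.getVert_zero] at this
    exact G.loopless.irrefl _ this
  have : NeZero w.length := ⟨by omega⟩
  have : Fact (1 < w.length) := ⟨by omega⟩
  refine ⟨w.length, fun i => w.getVert i.val, hodd, h3, ?_, ?_⟩
  · intro i j hij
    have hi := ZMod.val_lt i
    have hj := ZMod.val_lt j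
    apply ZMod.val_injective
    rcases lt_trichotomy i.val j.val with h | h | h
    · exact absurd hij (hinj _ _ h hj)
    · exact h
    · exact absurd hij.symm (hinj _ _ h hi)
  · intro i
    have hi := ZMod.val_lt i
    have := w.adj_getVert_succ hi
    by_cases hl : i.val + 1 < w.length
    · have : (i + 1).val = i.val + 1 := by
        rw [ZMod.val_add_of_lt] <;> rw [ZMod.val_one]
        exact hl
      simp only [this]
      assumption
    · have he : i.val + 1 = w.length := by omega
      have h0 : (i + 1).val = 0 := by
        rw [ZMod.val_add, ZMod.val_one, he, Nat.mod_self]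
      simp only [h0, w.getVert_zero]
      rw [he, w.getVert_length] at this
      exact this

/-- Weighted König, via Hall. -/
theorem konig {k : Type} [Field k] {σ : Type} [Fintype σ] [DecidableEq σ] (Γ : SimpleGraph σ)
    [DecidableRel Γ.Adj]
    (a : σ → ℕ) (A B : Finset σ) (τ : ℕ)
    (hcov : ∀ U ⊆ A, τ ≤ ∑ i ∈ A \ U, a i + ∑ i ∈ B with (∃ u ∈ U, Γ.Adj u i), a i) :
    (∏ i ∈ A, (X i : MvPolynomial σ k) ^ a i) * ∏ i ∈ B, (X i : MvPolynomial σ k) ^ a i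
      ∈ edgeIdeal k Γ ^ τ := by
  classical
  set d := ∑ i ∈ A, a i - τ with hd
  have hA : τ ≤ ∑ i ∈ A, a i := by simpa using hcov ∅ (by simp)
  let sA : Finset (Σ _ : σ, ℕ) := A.sigma fun i => Finset.range (a i)
  let sB : Finset (Σ _ : σ, ℕ) := B.sigma fun i => Finset.range (a i)
  let tt : sA → Finset ((Σ _ : σ, ℕ) ⊕ ℕ) := fun x =>
    (sB.filter fun y => Γ.Adj x.1.1 y.1).disjSum (Finset.range d)
  obtain ⟨f, finj, hf⟩ := (Finset.all_card_le_biUnion_card_iff_exists_injective tt).1 (by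
    intro s
    rcases s.eq_empty_or_nonempty with rfl | hs
    · simp
    let U : Finset σ := s.image fun x => x.1.1
    have hUA : U ⊆ A := by
      intro u hu
      obtain ⟨x, hx, rfl⟩ := Finset.mem_image.1 hu
      exact (Finset.mem_sigma.1 x.2).1
    have h1 : s.card ≤ ∑ i ∈ U, a i := by
      have : s.card ≤ (U.sigma fun i => Finset.range (a i)).card := by
        rw [← Finset.card_map (Function.Embedding.subtype _)]
        apply Finset.card_le_card
        intro x hx
        obtain ⟨y, hy, rfl⟩ := Finset.mem_map.1 hx
        exact Finset.mem_sigma.2 ⟨Finset.mem_image.2 ⟨y, hy, rfl⟩, (Finset.mem_sigma.1 y.2).2⟩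
      simpa using this
    have h2 : s.biUnion tt = (((B.filter fun i => ∃ u ∈ U, Γ.Adj u i).sigma
        fun i => Finset.range (a i)).disjSum (Finset.range d)) := by
      obtain ⟨x0, hx0⟩ := hs
      ext y
      rcases y with y | y
      · simp only [tt, U, sB, Finset.mem_biUnion, Finset.inl_mem_disjSum, Finset.mem_filter,
          Finset.mem_sigma, Finset.mem_image]
        constructor
        · rintro ⟨x, hx, ⟨h1, h2⟩, h3⟩
          exact ⟨⟨h1, _, ⟨x, hx, rfl⟩, h3⟩, h2⟩
        · rintro ⟨⟨h1, _, ⟨x, hx, rfl⟩, h3⟩, h2⟩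
          exact ⟨x, hx, ⟨h1, h2⟩, h3⟩
      · simp only [tt, Finset.mem_biUnion, Finset.inr_mem_disjSum]
        exact ⟨fun ⟨_, _, h⟩ => h, fun h => ⟨x0, hx0, h⟩⟩
    have h3 := hcov U hUA
    have h4 := Finset.sum_sdiff (f := a) hUA
    rw [h2, Finset.card_disjSum]
    simp only [Finset.card_sigma, Finset.card_range]
    omega)
  let S : Finset sA := Finset.univ.filter fun x => (f x).isLeft
  have hS : τ ≤ S.card := by
    have hc : sA.card = ∑ i ∈ A, a i := by simp [sA]
    have h1 : (Finset.univ.filter fun x => ¬ (f x).isLeft).card ≤ d := by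
      rw [← Finset.card_map ⟨f, finj⟩]
      have : (Finset.range d).card = d := by simp
      rw [← this, ← Finset.card_map (⟨Sum.inr, Sum.inr_injective⟩ : ℕ ↪ (Σ _ : σ, ℕ) ⊕ ℕ)]
      apply Finset.card_le_card
      intro y hy
      obtain ⟨x, hx, rfl⟩ := Finset.mem_map.1 hy
      have h2 := hf x
      rw [Finset.mem_filter] at hx
      simp only [Function.Embedding.coeFn_mk] at *
      rcases hfx : f x with y | y
      · simp [hfx] at hx
      · rw [hfx] at h2
        rw [Finset.mem_map]
        exact ⟨y, Finset.inr_mem_disjSum.1 h2, rfl⟩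
    have h2 := Finset.card_filter_add_card_filter_not (s := (Finset.univ : Finset sA))
      (fun x => ((f x).isLeft : Prop))
    rw [Finset.card_univ, Fintype.card_coe, hc] at h2
    change S.card + _ = _ at h2
    omega
  have key : ∀ x, ∃ y, x ∈ S → y ∈ sB ∧ f x = Sum.inl y ∧ Γ.Adj x.1.1 y.1 := by
    intro x
    by_cases hx : x ∈ S
    swap
    · exact ⟨x.1, fun h => absurd h hx⟩
    have h2 := hf x
    have h3 := (Finset.mem_filter.1 hx).2
    rcases hfx : f x with y | y
    · rw [hfx] at h2
      have := Finset.mem_filter.1 (Finset.inl_mem_disjSum.1 h2)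
      exact ⟨y, fun _ => ⟨this.1, rfl, this.2⟩⟩
    · simp [hfx] at h3
  choose g hg using key
  have hgB := fun x hx => (hg x hx).1
  have hgf := fun x hx => (hg x hx).2.1
  have hgA := fun x hx => (hg x hx).2.2
  have hprod : ∏ x ∈ S, ((X x.1.1 : MvPolynomial σ k) * X (g x).1) ∈ edgeIdeal k Γ ^ τ := by
    apply Ideal.pow_le_pow_right hS
    rw [← Finset.prod_const]
    exact Ideal.prod_mem_prod fun x hx => Ideal.subset_span ⟨_, _, hgA x hx, rfl⟩
  refine Ideal.mem_of_dvd _ ?_ hprod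
  rw [Finset.prod_mul_distrib]
  apply mul_dvd_mul
  · have : ∏ i ∈ A, (X i : MvPolynomial σ k) ^ a i = ∏ x ∈ sA, X x.1 := by
      rw [Finset.prod_sigma]
      simp
    rw [this]
    have h := Finset.prod_map S (Function.Embedding.subtype _)
      (fun x : (Σ _ : σ, ℕ) => (X x.1 : MvPolynomial σ k))
    simp only [Function.Embedding.subtype_apply] at h
    rw [← h]
    apply Finset.prod_dvd_prod_of_subset
    intro x hx
    obtain ⟨y, hy, rfl⟩ := Finset.mem_map.1 hx
    exact y.2
  · have : ∏ i ∈ B, (X i : MvPolynomial σ k) ^ a i = ∏ x ∈ sB, X x.1 := by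
      rw [Finset.prod_sigma]
      simp
    rw [this]
    have h := Finset.prod_image (s := S) (g := g)
      (f := fun x : (Σ _ : σ, ℕ) => (X x.1 : MvPolynomial σ k)) (by
        intro x hx y hy hxy
        apply finj
        rw [hgf x hx, hgf y hy, hxy])
    rw [← h]
    apply Finset.prod_dvd_prod_of_subset
    intro x hx
    obtain ⟨y, hy, rfl⟩ := Finset.mem_image.1 hx
    exact hgB y hy

/-- Rees-type substitution `x_i ↦ x_i T` for `i ∉ F`. -/
def reesMap (k : Type) [Field k] {σ : Type} [Fintype σ] [DecidableEq σ] (F : Finset σ) :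
    MvPolynomial σ k →ₐ[k] Polynomial (MvPolynomial σ k) :=
  aeval fun i => if i ∈ F then Polynomial.C (X i) else Polynomial.C (X i) * Polynomial.X

theorem reesMap_monomial (k : Type) [Field k] {σ : Type} [Fintype σ] [DecidableEq σ]
    (F : Finset σ) (m : σ →₀ ℕ) (r : k) :
    reesMap k F (monomial m r) =
      Polynomial.C (monomial m r) * Polynomial.X ^ (∑ i ∈ Fᶜ, m i) := by
  rw [reesMap, aeval_monomial, monomial_eq, Finsupp.prod_fintype _ _ (by simp),
    Finsupp.prod_fintype _ _ (by simp), ← Finset.prod_pow_eq_pow_sum, map_mul, map_prod, mul_assoc]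
  congr 1
  rw [← Finset.prod_mul_prod_compl F, ← Finset.prod_mul_prod_compl F, mul_assoc,
    ← Finset.prod_mul_distrib]
  congr 1
  · exact Finset.prod_congr rfl fun i hi => by simp [hi]
  · exact Finset.prod_congr rfl fun i hi => by
      rw [Finset.mem_compl] at hi
      simp [hi, mul_pow]

theorem reesMap_coeff (k : Type) [Field k] {σ : Type} [Fintype σ] [DecidableEq σ]
    (F : Finset σ) (f : MvPolynomial σ k) (m : σ →₀ ℕ) (d : ℕ) :
    coeff m ((reesMap k F f).coeff d) = if ∑ i ∈ Fᶜ, m i = d then coeff m f else 0 := by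
  induction f using MvPolynomial.induction_on' with
  | monomial m' r =>
    rw [reesMap_monomial, Polynomial.coeff_C_mul_X_pow]
    by_cases hm : m' = m
    · subst hm
      split_ifs <;> simp_all
    · split_ifs <;> simp [hm]
  | add p q hp hq =>
    rw [map_add, Polynomial.coeff_add, coeff_add, hp, hq]
    split_ifs <;> simp

theorem reesMap_dvd (k : Type) [Field k] {σ : Type} [Fintype σ] [DecidableEq σ]
    (F : Finset σ) (f : MvPolynomial σ k) (t : ℕ) :
    Polynomial.X ^ t ∣ reesMap k F f ↔ ∀ m ∈ f.support, t ≤ ∑ i ∈ Fᶜ, m i := by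
  rw [Polynomial.X_pow_dvd_iff]
  constructor
  · intro h m hm
    by_contra hlt
    have := congrArg (coeff m) (h _ (not_le.1 hlt))
    rw [reesMap_coeff, if_pos rfl] at this
    exact (mem_support_iff.1 hm) this
  · intro h d hd
    ext m
    rw [reesMap_coeff, coeff_zero]
    split_ifs with hm
    · by_contra hne
      have := h m (mem_support_iff.2 hne)
      omega
    · rfl

/-- The prime `P_F`. -/
def pPr (k : Type) [Field k] {σ : Type} [Fintype σ] [DecidableEq σ] (F : Finset σ) (t : ℕ) :
    Ideal (MvPolynomial σ k) :=
  Ideal.comap (reesMap k F) (Ideal.span {Polynomial.X ^ t})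

theorem mem_pPr {k : Type} [Field k] {σ : Type} [Fintype σ] [DecidableEq σ] {F : Finset σ} {t : ℕ}
    {f : MvPolynomial σ k} : f ∈ pPr k F t ↔ Polynomial.X ^ t ∣ reesMap k F f := by
  rw [pPr, Ideal.mem_comap, Ideal.mem_span_singleton]

theorem X_mem_pPr {k : Type} [Field k] {σ : Type} [Fintype σ] [DecidableEq σ] {F : Finset σ}
    {i : σ} : (X i : MvPolynomial σ k) ∈ pPr k F 1 ↔ i ∉ F := by
  rw [mem_pPr, reesMap_dvd, support_X]
  simp [Finsupp.single_apply, Nat.one_le_iff_ne_zero]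

theorem pPr_primary {k : Type} [Field k] {σ : Type} [Fintype σ] [DecidableEq σ] {F : Finset σ}
    {t : ℕ} {f g : MvPolynomial σ k} (hg : g ∉ pPr k F 1) (h : g * f ∈ pPr k F t) :
    f ∈ pPr k F t := by
  rw [mem_pPr] at *
  rw [map_mul] at h
  rw [pow_one] at hg
  exact Polynomial.prime_X.pow_dvd_of_dvd_mul_left t hg h

theorem pPr_isPrime (k : Type) [Field k] {σ : Type} [Fintype σ] [DecidableEq σ] (F : Finset σ) :
    (pPr k F 1).IsPrime := by
  have : (Ideal.span {(Polynomial.X : Polynomial (MvPolynomial σ k)) ^ 1}).IsPrime := by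
    rw [pow_one, Ideal.span_singleton_prime Polynomial.X_ne_zero]
    exact Polynomial.prime_X
  exact Ideal.comap_isPrime _ _

theorem pPr_one_le {k : Type} [Field k] {σ : Type} [Fintype σ] [DecidableEq σ] {F : Finset σ}
    {q : Ideal (MvPolynomial σ k)} (h : ∀ i ∉ F, X i ∈ q) : pPr k F 1 ≤ q := by
  intro f hf
  rw [mem_pPr, reesMap_dvd] at hf
  have : f ∈ Ideal.span (X '' {i : σ | i ∉ F} : Set (MvPolynomial σ k)) := by
    rw [mem_ideal_span_X_image]
    intro m hm
    have h1 := hf m hm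
    obtain ⟨i, hi, hne⟩ := Finset.exists_ne_zero_of_sum_ne_zero (by omega : ∑ i ∈ Fᶜ, m i ≠ 0)
    exact ⟨i, Finset.mem_compl.1 hi, hne⟩
  refine (Ideal.span_le.2 ?_) this
  rintro _ ⟨i, hi, rfl⟩
  exact h i hi

theorem edgeIdeal_pow_le {k : Type} [Field k] {σ : Type} [Fintype σ] [DecidableEq σ]
    {Γ : SimpleGraph σ} {F : Finset σ} (hF : IsIndep Γ F) (t : ℕ) :
    edgeIdeal k Γ ^ t ≤ pPr k F t := by
  have h1 : edgeIdeal k Γ ≤ Ideal.comap (reesMap k F) (Ideal.span {Polynomial.X}) := by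
    rw [edgeIdeal, Ideal.span_le]
    rintro _ ⟨i, j, hij, rfl⟩
    have : (X i * X j : MvPolynomial σ k) ∈ pPr k F 1 := by
      by_cases hi : i ∈ F
      · exact Ideal.mul_mem_left _ _ (X_mem_pPr.2 fun hj => hF i hi j hj hij)
      · exact Ideal.mul_mem_right _ _ (X_mem_pPr.2 hi)
    simpa [pPr] using this
  calc edgeIdeal k Γ ^ t ≤ _ := Ideal.pow_right_mono h1 t
    _ ≤ _ := Ideal.le_comap_pow _ t
    _ = _ := by rw [pPr, Ideal.span_singleton_pow]

theorem pPr_minimal {k : Type} [Field k] {σ : Type} [Fintype σ] [DecidableEq σ]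
    {Γ : SimpleGraph σ} {F : Finset σ} (hF : IsMaxIndep Γ F) :
    pPr k F 1 ∈ (edgeIdeal k Γ).minimalPrimes := by
  refine ⟨⟨pPr_isPrime k F, by simpa using edgeIdeal_pow_le (k := k) hF.1 1⟩, ?_⟩
  rintro q ⟨hq, hIq⟩ hle
  apply pPr_one_le
  intro i hi
  have : ∃ j ∈ F, Γ.Adj i j := by
    by_contra hno
    push Not at hno
    have := hF.2 (insert i F) (by
      intro a ha b hb hab
      rw [Finset.mem_insert] at ha hb
      rcases ha with rfl | ha <;> rcases hb with rfl | hb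
      · exact Γ.loopless.irrefl _ hab
      · exact hno _ hb hab
      · exact hno _ ha hab.symm
      · exact hF.1 _ ha _ hb hab) (Finset.subset_insert _ _)
    exact hi (this ▸ Finset.mem_insert_self _ _)
  obtain ⟨j, hj, hij⟩ := this
  have h1 : (X i * X j : MvPolynomial σ k) ∈ q := hIq (Ideal.subset_span ⟨i, j, hij, rfl⟩)
  exact (hq.mem_or_mem h1).resolve_right fun h => X_mem_pPr.1 (hle h) hj

theorem exists_maxIndep {σ : Type} [Fintype σ] [DecidableEq σ] {Γ : SimpleGraph σ} {F : Finset σ}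
    (hF : IsIndep Γ F) : ∃ G, IsMaxIndep Γ G ∧ F ⊆ G := by
  obtain ⟨G, hFG, hG⟩ := (Set.toFinite {G : Finset σ | IsIndep Γ G}).exists_le_maximal hF
  exact ⟨G, ⟨hG.1, fun H hH hGH => le_antisymm (hG.2 hH hGH) hGH⟩, hFG⟩

theorem core {k : Type} [Field k] {σ : Type} [Fintype σ] [DecidableEq σ] (Γ : SimpleGraph σ)
    (v : σ) (c : σ → Bool)
    (hc : ∀ i j, i ≠ v → ¬ Γ.Adj v i → j ≠ v → ¬ Γ.Adj v j → Γ.Adj i j → c i ≠ c j)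
    (t : ℕ) (f : MvPolynomial σ k) (hf : ∀ F, IsMaxIndep Γ F → v ∈ F → f ∈ pPr k F t) :
    ∃ s : ℕ, X v ^ s * f ∈ edgeIdeal k Γ ^ t := by
  classical
  refine ⟨∑ m ∈ f.support, ∑ i, m i, ?_⟩
  conv => enter [2, 2]; rw [f.as_sum]
  rw [Finset.mul_sum]
  refine Ideal.sum_mem _ fun m hm => ?_
  let N := Finset.univ.filter fun i => Γ.Adj v i
  let A := Finset.univ.filter fun i => i ≠ v ∧ ¬ Γ.Adj v i ∧ c i = true
  let B := Finset.univ.filter fun i => i ≠ v ∧ ¬ Γ.Adj v i ∧ c i = false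
  have hsplit : ∀ (M : Type) [CommMonoid M] (g : σ → M),
      ∏ i, g i = (∏ i ∈ N, g i) * (g v * ((∏ i ∈ A, g i) * ∏ i ∈ B, g i)) := by
    intro M _ g
    rw [← Finset.prod_filter_mul_prod_filter_not Finset.univ (fun i => Γ.Adj v i)]
    congr 1
    rw [← Finset.mul_prod_erase _ g (a := v) (by simp)]
    congr 1
    rw [← Finset.prod_filter_mul_prod_filter_not _ (fun i => c i = true)]
    congr 1 <;>
    · apply Finset.prod_congr _ fun _ _ => rfl
      ext i
      simp [A, B, and_assoc]
  set s1 := ∑ i ∈ N, m i with hs1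
  have hs1le : s1 ≤ ∑ m ∈ f.support, ∑ i, m i :=
    (Finset.sum_le_sum_of_subset (Finset.subset_univ N)).trans
      (Finset.single_le_sum (f := fun m : σ →₀ ℕ => ∑ i, m i) (fun _ _ => Nat.zero_le _) hm)
  have hK := konig (k := k) Γ (fun i => m i) A B (t - s1) (by
    intro U hU
    have hAm : ∀ i ∈ U, i ≠ v ∧ ¬ Γ.Adj v i ∧ c i = true := fun i hi =>
      (Finset.mem_filter.1 (hU hi)).2
    have hBm : ∀ i ∈ B, i ≠ v ∧ ¬ Γ.Adj v i ∧ c i = false := fun i hi =>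
      (Finset.mem_filter.1 hi).2
    let F0 : Finset σ := insert v (U ∪ B.filter fun i => ¬ ∃ u ∈ U, Γ.Adj u i)
    have hF0 : IsIndep Γ F0 := by
      intro i hi j hj hij
      simp only [F0, Finset.mem_insert, Finset.mem_union, Finset.mem_filter, not_exists,
        not_and] at hi hj
      rcases hi with rfl | hi | ⟨hi, hi'⟩ <;> rcases hj with rfl | hj | ⟨hj, hj'⟩
      · exact Γ.loopless.irrefl _ hij
      · exact (hAm j hj).2.1 hij
      · exact (hBm j hj).2.1 hij
      · exact (hAm i hi).2.1 hij.symm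
      · exact hc i j (hAm i hi).1 (hAm i hi).2.1 (hAm j hj).1 (hAm j hj).2.1 hij
          ((hAm i hi).2.2.trans (hAm j hj).2.2.symm)
      · exact hj' i hi hij
      · exact (hBm i hi).2.1 hij.symm
      · exact hi' j hj hij.symm
      · exact hc i j (hBm i hi).1 (hBm i hi).2.1 (hBm j hj).1 (hBm j hj).2.1 hij
          ((hBm i hi).2.2.trans (hBm j hj).2.2.symm)
    obtain ⟨F, hF, hsub⟩ := exists_maxIndep hF0
    have h1 := (reesMap_dvd k F f t).1
      (mem_pPr.1 (hf F hF (hsub (Finset.mem_insert_self _ _)))) m hm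
    have h2 : Fᶜ ⊆ N ∪ ((A \ U) ∪ B.filter fun i => ∃ u ∈ U, Γ.Adj u i) := by
      intro i hi
      have hi0 : i ∉ F0 := fun h => Finset.mem_compl.1 hi (hsub h)
      simp only [F0, A, B, N, Finset.mem_insert, Finset.mem_union, Finset.mem_filter,
        Finset.mem_univ, true_and, Finset.mem_sdiff] at hi0 ⊢
      rcases hci : c i <;> tauto
    have h3 := Finset.sum_le_sum_of_subset (f := fun i => m i) h2
    have h4 := Finset.sum_union_inter (s₁ := N)
      (s₂ := ((A \ U) ∪ B.filter fun i => ∃ u ∈ U, Γ.Adj u i)) (f := fun i => m i)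
    have h5 := Finset.sum_union_inter (s₁ := A \ U)
      (s₂ := (B.filter fun i => ∃ u ∈ U, Γ.Adj u i)) (f := fun i => m i)
    omega)
  have hN : (X v : MvPolynomial σ k) ^ s1 * ∏ i ∈ N, X i ^ m i ∈ edgeIdeal k Γ ^ s1 := by
    rw [hs1, ← Finset.prod_pow_eq_pow_sum N (fun i => m i) (edgeIdeal k Γ),
      ← Finset.prod_pow_eq_pow_sum N (fun i => m i) (X v), ← Finset.prod_mul_distrib]
    refine Ideal.prod_mem_prod fun i hi => ?_
    rw [← mul_pow]
    have hvi : (X v * X i : MvPolynomial σ k) ∈ edgeIdeal k Γ :=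
      Ideal.subset_span ⟨v, i, (Finset.mem_filter.1 hi).2, rfl⟩
    exact Ideal.pow_mem_pow hvi _
  have hmul := Ideal.mul_mem_mul hN hK
  rw [← pow_add] at hmul
  have hmul' := Ideal.pow_le_pow_right (show t ≤ s1 + (t - s1) by omega) hmul
  refine Ideal.mem_of_dvd _ ?_ hmul'
  rw [monomial_eq, Finsupp.prod_fintype _ _ (by simp), hsplit]
  obtain ⟨e, he⟩ := Nat.exists_eq_add_of_le hs1le
  rw [he]
  refine ⟨X v ^ e * (C (coeff m f) * X v ^ m v), ?_⟩
  ring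

theorem final {k : Type} [Field k] {σ : Type} [Fintype σ] [DecidableEq σ] (Γ : SimpleGraph σ)
    (hdom : ∀ (m : ℕ) (c : ZMod m → σ), IsOddCycle Γ m c → Dominating Γ (Set.range c))
    (t : ℕ) (p : Ideal (MvPolynomial σ k))
    (hp : p ∈ associatedPrimes (MvPolynomial σ k) (MvPolynomial σ k ⧸ (edgeIdeal k Γ) ^ t))
    (hpm : p ≠ maxIdeal k σ) : p ∈ (edgeIdeal k Γ).minimalPrimes := by
  classical
  obtain ⟨hprime, x, hx⟩ := isAssociatedPrime_iff.1 hp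
  obtain ⟨f, rfl⟩ := Ideal.Quotient.mk_surjective x
  have hmem : ∀ g, g ∈ p ↔ g * f ∈ edgeIdeal k Γ ^ t := by
    intro g
    rw [hx, Submodule.mem_colon_singleton, Submodule.mem_bot, ← Ideal.Quotient.eq_zero_iff_mem,
      map_mul]
    rfl
  have hv : ∃ v, (X v : MvPolynomial σ k) ∉ p := by
    by_contra hno
    push Not at hno
    apply hpm
    have h1 : maxIdeal k σ ≤ p := Ideal.span_le.2 (by rintro _ ⟨i, rfl⟩; exact hno i)
    refine le_antisymm ?_ h1
    intro g hg
    by_contra hgm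
    have h0 : g - C (coeff 0 g) ∈ maxIdeal k σ := by
      rw [maxIdeal, ← Set.image_univ, mem_ideal_span_X_image]
      intro m hm
      by_contra hall
      push Not at hall
      have : m = 0 := by ext i; exact hall i trivial
      subst this
      simp at hm
    by_cases hc : coeff 0 g = 0
    · rw [hc, C_0, sub_zero] at h0
      exact hgm h0
    · have h2 : C (coeff 0 g) ∈ p := by
        have := p.sub_mem hg (h1 h0)
        simpa using this
      exact hprime.ne_top (Ideal.eq_top_of_isUnit_mem _ h2 ((isUnit_iff_ne_zero.2 hc).map C))
  obtain ⟨v, hv⟩ := hv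
  let S : Set σ := {u | u ≠ v ∧ ¬ Γ.Adj v u}
  have hcol : (Γ.induce S).Colorable 2 := by
    by_contra hn
    obtain ⟨m, c, hodd, h3, hinj, hadj⟩ := exists_oddCycle _ hn
    have := hdom m (fun i => (c i : σ))
      ⟨hodd, h3, Subtype.val_injective.comp hinj, fun i => hadj i⟩ v (by
        rintro ⟨i, hi⟩
        exact (c i).2.1 hi)
    obtain ⟨_, ⟨i, rfl⟩, hi⟩ := this
    exact (c i).2.2 hi.symm
  obtain ⟨col⟩ := hcol
  have hcore := core (k := k) Γ v (fun i => if h : i ∈ S then decide (col ⟨i, h⟩ = 0) else true) (by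
    intro i j hi hi' hj hj' hij
    have h1 : i ∈ S := ⟨hi, hi'⟩
    have h2 : j ∈ S := ⟨hj, hj'⟩
    have h3 : col ⟨i, h1⟩ ≠ col ⟨j, h2⟩ := col.valid hij
    simp only [h1, h2, dif_pos]
    intro h
    rw [decide_eq_decide] at h
    omega) t
  let FF : Finset (Finset σ) := Finset.univ.filter fun F => IsMaxIndep Γ F ∧ v ∈ F
  have hle : FF.inf (fun F => (pPr k F t).colon {f}) ≤ p := by
    intro g hg
    rw [Submodule.mem_finsetInf] at hg
    obtain ⟨s, hs⟩ := hcore (g * f) (fun F hF hvF => by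
      have := hg F (Finset.mem_filter.2 ⟨Finset.mem_univ _, hF, hvF⟩)
      simpa [Submodule.mem_colon_singleton] using this)
    rw [← mul_assoc, ← hmem] at hs
    exact (hprime.mem_or_mem hs).resolve_left fun h => hv (hprime.mem_of_pow_mem _ h)
  obtain ⟨F, hF, hFle⟩ := (Ideal.IsPrime.inf_le' hprime).1 hle
  obtain ⟨-, hF, hvF⟩ := Finset.mem_filter.1 hF
  have hfF : f ∉ pPr k F t := by
    intro h
    apply hprime.ne_top
    rw [Ideal.eq_top_iff_one]
    exact hFle (by simpa [Submodule.mem_colon_singleton] using h)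
  have h1 : p ≤ pPr k F 1 := by
    intro g hg
    by_contra hg1
    exact hfF (pPr_primary hg1 (edgeIdeal_pow_le hF.1 t ((hmem g).1 hg)))
  have hmin := pPr_minimal (k := k) hF
  have hIp : edgeIdeal k Γ ≤ p := by
    intro g hg
    refine hprime.mem_of_pow_mem t ?_
    rw [hmem]
    exact Ideal.mul_mem_right _ _ (Ideal.pow_mem_pow hg t)
  have h2 := hmin.2 ⟨hprime, hIp⟩ h1
  rw [le_antisymm h1 h2]
  exact hmin


/-- Let `Γ` be a connected non-bipartite graph in which the vertex set
of every odd cycle is dominating. Then for every `t ≥ 1`, every associated prime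
`p ≠ m` of `R/I^t` is a minimal prime of `I`. -/
theorem stmt8 (k : Type) [Field k] (n : ℕ) (Γ : SimpleGraph (Fin n))
    (hiso : NoIsolated Γ) (hconn : Γ.Connected) (hnb : ¬ Γ.Colorable 2)
    (hdom : ∀ (m : ℕ) (c : ZMod m → Fin n), IsOddCycle Γ m c →
      Dominating Γ (Set.range c))
    (t : ℕ) (ht : 1 ≤ t) (p : Ideal (MvPolynomial (Fin n) k))
    (hp : p ∈ associatedPrimes (MvPolynomial (Fin n) k)
      (MvPolynomial (Fin n) k ⧸ (edgeIdeal k Γ) ^ t))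
    (hpm : p ≠ maxIdeal k (Fin n)) :
    p ∈ (edgeIdeal k Γ).minimalPrimes := by
  exact final Γ hdom t p hp hpm

end
end
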